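/- Let A = (A₁,…,Aₙ) be a reduced and irreducible tuple of finite subsets of ℤⁿ for which there is no group automorphism φ of ℤⁿ and no vectors v₁,…,vₙ ∈ ℤⁿ with φ(Aᵢ) + vᵢ ⊆ {0, e₁, …, eₙ} for all i. Then A is dual effective, and moreover there exists a Zariski-closed proper subset S ⊊ D_A such that every f ∈ D_A ∖ S has exactly one singular root x ∈ (ℂ∖{0})ⁿ, the Jacobian matrix (∂fᵢ/∂xⱼ(x)) at this root has rank exactly n − 1, and every other root of f is nonsingular. -/

import Mathlib

open Pointwise MeasureTheory

namespace Esterov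

/-- The standard embedding of the lattice `ℤⁿ` into `ℝⁿ`. -/
def toR {n : ℕ} (a : Fin n → ℤ) : Fin n → ℝ := fun j => (a j : ℝ)

/-- The lattice mixed volume of finite sets `A₁, …, Aₙ ⊆ ℤⁿ`:
`MV(A₁,…,Aₙ) = ∑_{∅ ≠ S ⊆ {1,…,n}} (−1)^{n−|S|} vol (conv (∑_{i ∈ S} Aᵢ))`. -/
noncomputable def MV {n : ℕ} (A : Fin n → Finset (Fin n → ℤ)) : ℝ :=
  ∑ S ∈ Finset.univ.powerset.filter (fun S : Finset (Fin n) => S.Nonempty),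
    (-1 : ℝ) ^ (n - S.card) *
      (volume (convexHull ℝ (∑ i ∈ S, toR '' (A i : Set (Fin n → ℤ))))).toReal

/-- The complex torus `(ℂ∖0)ⁿ`. -/
abbrev Torus (n : ℕ) := Fin n → ℂˣ

/-- The index type of the coefficients of a tuple of supports. -/
abbrev CIdx {n : ℕ} (A : Fin n → Finset (Fin n → ℤ)) := Σ i : Fin n, {a : Fin n → ℤ // a ∈ A i}

/-- The space `ℂ^A = ℂ^{A₁} ⊕ ⋯ ⊕ ℂ^{Aₙ}` of systems of Laurent polynomials supported at `A`,
encoded by their coefficients. -/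
abbrev Coeff {n : ℕ} (A : Fin n → Finset (Fin n → ℤ)) := CIdx A → ℂ

/-- The value of the Laurent monomial `x^a` at a point `x` of the torus. -/
noncomputable def mono {n : ℕ} (a : Fin n → ℤ) (x : Torus n) : ℂ :=
  ∏ j, ((x j : ℂ) ^ (a j))

/-- The value of the `i`-th polynomial of the system `c ∈ ℂ^A` at `x`. -/
noncomputable def evalAt {n : ℕ} (A : Fin n → Finset (Fin n → ℤ)) (c : Coeff A) (i : Fin n)
    (x : Torus n) : ℂ :=
  ∑ a ∈ (A i).attach, c ⟨i, a⟩ * mono a.1 x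

/-- `x` is a common root of the system `c ∈ ℂ^A`. -/
def IsRoot {n : ℕ} (A : Fin n → Finset (Fin n → ℤ)) (c : Coeff A) (x : Torus n) : Prop :=
  ∀ i, evalAt A c i x = 0

/-- The Jacobian matrix `(∂fᵢ/∂xⱼ (x))` of the system `c ∈ ℂ^A` at `x`
(note `∂(x^a)/∂xⱼ = aⱼ x^a / xⱼ`). -/
noncomputable def jacobian {n : ℕ} (A : Fin n → Finset (Fin n → ℤ)) (c : Coeff A)
    (x : Torus n) : Matrix (Fin n) (Fin n) ℂ :=
  Matrix.of fun i j => (∑ a ∈ (A i).attach, c ⟨i, a⟩ * (a.1 j : ℂ) * mono a.1 x) * (x j : ℂ)⁻¹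

/-- `x` is a singular root of the system `c`: a common root at which the Jacobian matrix
is degenerate. -/
def IsSingularRoot {n : ℕ} (A : Fin n → Finset (Fin n → ℤ)) (c : Coeff A) (x : Torus n) :
    Prop :=
  IsRoot A c x ∧ (jacobian A c x).det = 0

/-- A subset of `ℂ^ι` is algebraic if it is the common zero locus of a family of polynomials. -/
def IsAlgebraicSet {ι : Type*} (Z : Set (ι → ℂ)) : Prop :=
  ∃ S : Set (MvPolynomial ι ℂ), Z = {c | ∀ p ∈ S, MvPolynomial.eval c p = 0}

/-- The Zariski closure of a subset of `ℂ^ι`. -/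
def zclosure {ι : Type*} (Z : Set (ι → ℂ)) : Set (ι → ℂ) :=
  ⋂₀ {W | IsAlgebraicSet W ∧ Z ⊆ W}

/-- The ideal of polynomials vanishing on a subset of `ℂ^ι`. -/
noncomputable def vanishingIdeal {ι : Type*} (Z : Set (ι → ℂ)) : Ideal (MvPolynomial ι ℂ) where
  carrier := {p | ∀ c ∈ Z, MvPolynomial.eval c p = 0}
  add_mem' := by
    intro p q hp hq c hc
    simp [hp c hc, hq c hc]
  zero_mem' := by
    intro c hc
    simp
  smul_mem' := by
    intro p q hq c hc
    simp [smul_eq_mul, hq c hc]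

/-- The (complex) dimension of a subset of `ℂ^ι`, as the Krull dimension of the coordinate
ring of its Zariski closure. -/
noncomputable def adim {ι : Type*} (Z : Set (ι → ℂ)) : WithBot ℕ∞ :=
  ringKrullDim (MvPolynomial ι ℂ ⧸ vanishingIdeal Z)

/-- The discriminant `D_A`: the Zariski closure of the set of systems having a singular root. -/
noncomputable def discSet {n : ℕ} (A : Fin n → Finset (Fin n → ℤ)) : Set (Coeff A) :=
  zclosure {c | ∃ x, IsSingularRoot A c x}

/-- The tuple `A` is dual effective: `D_A` is a hypersurface, i.e. has complex dimension
`dim ℂ^A − 1`. -/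
def DualEffective {n : ℕ} (A : Fin n → Finset (Fin n → ℤ)) : Prop :=
  adim (discSet A) = ((Fintype.card (CIdx A) - 1 : ℕ) : WithBot ℕ∞)

/-- The finite set `s` can be translated into the subgroup `L` of `ℤⁿ`. -/
def TranslatesInto {n : ℕ} (s : Finset (Fin n → ℤ)) (L : Submodule ℤ (Fin n → ℤ)) : Prop :=
  ∃ v : Fin n → ℤ, ∀ a ∈ s, a - v ∈ L

/-- A tuple of finite sets in `ℤⁿ` is reduced if the sets cannot all be translated into one
common proper subgroup of `ℤⁿ`. -/
def IsReducedTuple {n : ℕ} (A : Fin n → Finset (Fin n → ℤ)) : Prop :=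
  ¬ ∃ L : Submodule ℤ (Fin n → ℤ), L ≠ ⊤ ∧ ∀ i, TranslatesInto (A i) L

/-- A tuple of `n` finite sets in `ℤⁿ` is irreducible if for no `m` with `0 < m < n` can some
`n − m` of the sets be translated into one common subgroup of rank at most `n − m`. -/
def IsIrreducibleTuple {n : ℕ} (A : Fin n → Finset (Fin n → ℤ)) : Prop :=
  ¬ ∃ (I : Finset (Fin n)) (L : Submodule ℤ (Fin n → ℤ)),
      0 < I.card ∧ I.card < n ∧ Module.finrank ℤ L ≤ I.card ∧
      ∀ i ∈ I, TranslatesInto (A i) L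

/-- The incidence variety `E = {(x, f) : f(x) = 0} ⊆ (ℂ∖0)ⁿ × ℂ^A`. -/
def incidence {n : ℕ} (A : Fin n → Finset (Fin n → ℤ)) : Set (Torus n × Coeff A) :=
  {p | IsRoot A p.2 p.1}

/-- The projection `π : E → ℂ^A`. -/
def proj {n : ℕ} (A : Fin n → Finset (Fin n → ℤ)) : incidence A → Coeff A :=
  fun p => p.1.2

/-- The set of roots of the system `c`. -/
def RootSet {n : ℕ} (A : Fin n → Finset (Fin n → ℤ)) (c : Coeff A) :=
  {x : Torus n // IsRoot A c x}

/-- `γ` is a loop in `ℂ^A ∖ B` based at `f`. -/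
def IsLoop {n : ℕ} (A : Fin n → Finset (Fin n → ℤ)) (B : Set (Coeff A)) (f : Coeff A)
    (γ : unitInterval → Coeff A) : Prop :=
  Continuous γ ∧ (∀ t, γ t ∉ B) ∧ γ 0 = f ∧ γ 1 = f

/-- The loop `γ` based at `f` induces the permutation `σ` of the root set of `f` by path
lifting: for every root `x` the lift of `γ` starting at `x` ends at `σ x`. -/
def Induces {n : ℕ} (A : Fin n → Finset (Fin n → ℤ)) (γ : unitInterval → Coeff A)
    (f : Coeff A) (σ : RootSet A f → RootSet A f) : Prop :=
  ∀ x : RootSet A f, ∃ δ : unitInterval → Torus n,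
    Continuous δ ∧ δ 0 = x.1 ∧ (∀ t, IsRoot A (γ t) (δ t)) ∧ δ 1 = (σ x).1

/-- The vertex set `{0, e₁, …, eₙ}` of the standard simplex in `ℤⁿ`. -/
def stdSimplexVertices (n : ℕ) : Set (Fin n → ℤ) :=
  insert 0 (Set.range fun j : Fin n => (Pi.single j 1 : Fin n → ℤ))

/-- The tuple `A` is linear up to a monomial change of variables: some automorphism of `ℤⁿ`
followed by translations takes each `Aᵢ` into `{0, e₁, …, eₙ}`. -/
def EssentiallyLinear {n : ℕ} (A : Fin n → Finset (Fin n → ℤ)) : Prop :=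
  ∃ (φ : (Fin n → ℤ) ≃+ (Fin n → ℤ)) (v : Fin n → (Fin n → ℤ)),
    ∀ i, ∀ a ∈ A i, φ a + v i ∈ stdSimplexVertices n

/-!
Index the monomials of the system by `k`, with block `blk k` and exponent `ex k`, and let
`wₖ = (e_{blk k}, ex k) ∈ ℤ²ⁿ` be the rows of the matrix `cayley`. If `x` is a singular root of `f`
and `l` a left null vector of the Jacobian matrix there, the numbers `fₖ l_{blk k} x^{ex k}` form a
linear relation among the `wₖ`. The converse holds if all `lᵢ ≠ 0`, and by irreducibility every
`(f, x, l)` is a limit of such. Hence the discriminant is parametrised by `fₖ = z^{-wₖ} cₖ`, where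
`z = (l, x)` is a point of the torus of rank `2n` and `c` is a relation (the Horn–Kapranov
parametrisation).

Let `G` vanish on the discriminant, and let `hₖ = z^{-wₖ} ∂G/∂fₖ` be its rescaled gradient at a
generic point. Differentiating `G(z^{-wₖ} cₖ) = 0` in `c` and in `z` shows that `hₖ` is a linear
function of `wₖ` and that `(cₖ hₖ)` is again a relation. As `c` is generic, the same follows for all
powers of `h`, so that the indicator functions of its level sets are linear functions of `wₖ` too.
If no vector is orthogonal to their linear parts in `ex k`, these functions map the supports to
vertices of a standard simplex, and the tuple is essentially linear. If `u` is such a vector, Rado's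
theorem on independent transversals provides relations `c` for which the matrix with rows
`∑_{blk k = i} cₖ ex k`, one of them replaced by `u`, is nonsingular, and this forces `h` to be
constant.

Thus the gradient at `f` is proportional to the vector of monomials `z^{wₖ}`, which determines the
singular root and, up to scaling, its left null vector. Taking `G` of minimal degree keeps its
partial derivatives from vanishing identically on the discriminant, which therefore is a
hypersurface; where none of them vanishes, the singular root is unique and has corank one.
-/

open scoped Matrix

theorem ringKrullDim_le_of_isIntegral (R S : Type*) [CommRing R] [CommRing S] [Algebra R S]
    [FaithfulSMul R S] [Algebra.IsIntegral R S] : ringKrullDim R ≤ ringKrullDim S := by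
  refine iSup_le fun l => ?_
  obtain ⟨Q, hQ⟩ := Algebra.IsIntegral.comap_surjective R S l.head
  have : Q.asIdeal.LiesOver l.head.asIdeal := ⟨congrArg PrimeSpectrum.asIdeal hQ.symm⟩
  obtain ⟨L, hL, -⟩ := Ideal.exists_ltSeries_of_hasGoingUp l Q.asIdeal
  exact hL ▸ le_iSup (fun p : LTSeries (PrimeSpectrum S) => (p.length : WithBot ℕ∞)) L

theorem card_le_ringKrullDim_of_algebraicIndependent {𝕜 B κ : Type*} [Field 𝕜] [CommRing B]
    [IsDomain B] [Algebra 𝕜 B] [Algebra.FiniteType 𝕜 B] [Fintype κ] {b : κ → B}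
    (hb : AlgebraicIndependent 𝕜 b) : (Fintype.card κ : WithBot ℕ∞) ≤ ringKrullDim B := by
  obtain ⟨s, g, hinj, hint⟩ := exists_integral_inj_algHom_of_fg 𝕜 B
  let P := MvPolynomial (Fin s) 𝕜
  let : Algebra P B := g.toRingHom.toAlgebra
  have : IsScalarTower 𝕜 P B := IsScalarTower.of_algebraMap_eq fun x => (g.commutes x).symm
  have : Algebra.IsIntegral P B := ⟨hint⟩
  have : FaithfulSMul P B := (faithfulSMul_iff_algebraMap_injective _ _).mpr hinj
  have hcard : Fintype.card κ ≤ s := by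
    have hadd := lift_trdeg_add_eq 𝕜 P B
    rw [trdeg_eq_zero (R := P) (A := B), MvPolynomial.trdeg_of_isDomain] at hadd
    have hle : (Fintype.card κ : Cardinal) ≤ Algebra.trdeg 𝕜 B := by
      simpa using hb.lift_cardinalMk_le_trdeg
    have hge : Algebra.trdeg 𝕜 B ≤ s := by simpa using hadd.ge
    exact_mod_cast hle.trans hge
  calc (Fintype.card κ : WithBot ℕ∞) ≤ s := by exact_mod_cast hcard
    _ = ringKrullDim P := by simp [P, MvPolynomial.ringKrullDim_of_isNoetherianRing]
    _ ≤ ringKrullDim B := ringKrullDim_le_of_isIntegral P B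

theorem exists_lt_lt_sup_eq_of_one_lt_finrank {𝕜 V : Type*} [DivisionRing 𝕜] [AddCommGroup V]
    [Module 𝕜 V] (L : Submodule 𝕜 V) (hL : 1 < Module.finrank 𝕜 L) :
    ∃ X Y : Submodule 𝕜 V, X < L ∧ Y < L ∧ X ⊔ Y = L := by
  obtain ⟨v, hv, hv0⟩ := L.exists_mem_ne_zero_of_ne_bot (by rintro rfl; simp at hL)
  have hle : 𝕜 ∙ v ≤ L := by rwa [Submodule.span_singleton_le_iff_mem]
  obtain ⟨Y, hY⟩ := exists_isCompl (𝕜 ∙ v)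
  refine ⟨𝕜 ∙ v, Y ⊓ L, hle.lt_of_ne ?_, inf_le_right.lt_of_ne fun h => hv0 ?_, ?_⟩
  · rintro rfl
    rw [finrank_span_singleton hv0] at hL
    exact lt_irrefl 1 hL
  · have hvY : v ∈ Y := (h.symm ▸ hv : v ∈ Y ⊓ L).1
    exact (Submodule.mem_bot 𝕜).mp (hY.disjoint.le_bot ⟨Submodule.mem_span_singleton_self v, hvY⟩)
  · rw [← sup_inf_assoc_of_le Y hle, hY.sup_eq_top, top_inf_eq]

section Rado

variable {𝕜 V κ : Type*} [DivisionRing 𝕜] [AddCommGroup V] [Module 𝕜 V]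

/-- Rado's condition, the analogue of Hall's condition for a linearly independent transversal. -/
def RadoCondition (L : κ → Submodule 𝕜 V) : Prop :=
  ∀ J : Finset κ, J.card ≤ Module.finrank 𝕜 (⨆ i ∈ J, L i : Submodule 𝕜 V)

theorem iSup_update_of_notMem [DecidableEq κ] (L : κ → Submodule 𝕜 V) (i : κ)
    (X : Submodule 𝕜 V) {J : Finset κ} (hi : i ∉ J) :
    ⨆ j ∈ J, Function.update L i X j = ⨆ j ∈ J, L j :=
  iSup_congr fun _ => iSup_congr fun hj => Function.update_of_ne (ne_of_mem_of_not_mem hj hi) ..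

theorem RadoCondition.update_left_or_right [FiniteDimensional 𝕜 V] [DecidableEq κ]
    {L : κ → Submodule 𝕜 V} (hL : RadoCondition L) (i : κ) {X Y : Submodule 𝕜 V}
    (hXY : X ⊔ Y = L i) :
    RadoCondition (Function.update L i X) ∨ RadoCondition (Function.update L i Y) := by
  by_contra! h
  simp only [RadoCondition, not_forall, not_le] at h
  obtain ⟨⟨J, hJ⟩, K, hK⟩ := h
  have hiJ : i ∈ J := by
    by_contra hi
    exact (hL J).not_gt (iSup_update_of_notMem L i X hi ▸ hJ)
  have hiK : i ∈ K := by
    by_contra hi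
    exact (hL K).not_gt (iSup_update_of_notMem L i Y hi ▸ hK)
  set SX := ⨆ j ∈ J, Function.update L i X j
  set SY := ⨆ j ∈ K, Function.update L i Y j
  have hSX : ∀ j ∈ J, Function.update L i X j ≤ SX := fun j hj =>
    le_iSup₂ (f := fun j (_ : j ∈ J) => Function.update L i X j) j hj
  have hSY : ∀ j ∈ K, Function.update L i Y j ≤ SY := fun j hj =>
    le_iSup₂ (f := fun j (_ : j ∈ K) => Function.update L i Y j) j hj
  have hsup : ⨆ j ∈ J ∪ K, L j ≤ SX ⊔ SY := by
    refine iSup₂_le fun j hj => ?_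
    obtain rfl | hne := eq_or_ne j i
    · rw [← hXY]
      exact sup_le_sup (by simpa using hSX j hiJ) (by simpa using hSY j hiK)
    · obtain hj | hj := Finset.mem_union.mp hj
      · exact le_sup_of_le_left (by simpa [hne] using hSX j hj)
      · exact le_sup_of_le_right (by simpa [hne] using hSY j hj)
  have hinf : ⨆ j ∈ (J ∩ K).erase i, L j ≤ SX ⊓ SY := by
    refine iSup₂_le fun j hj => ?_
    obtain ⟨hne, hjJ, hjK⟩ := by simpa only [Finset.mem_erase, Finset.mem_inter] using hj
    exact le_inf (by simpa [hne] using hSX j hjJ) (by simpa [hne] using hSY j hjK)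
  have hi : i ∈ J ∩ K := Finset.mem_inter.mpr ⟨hiJ, hiK⟩
  have hcard_sup := (hL _).trans (Submodule.finrank_mono hsup)
  have hcard_inf := (hL _).trans (Submodule.finrank_mono hinf)
  rw [Finset.card_erase_of_mem hi] at hcard_inf
  have := Submodule.finrank_sup_add_finrank_inf_eq SX SY
  have := Finset.card_union_add_card_inter J K
  have := Finset.card_pos.mpr ⟨i, hi⟩
  omega

theorem RadoCondition.exists_linearIndependent_of_finrank_le_one [Finite κ]
    {L : κ → Submodule 𝕜 V} (hL : RadoCondition L) (h : ∀ i, Module.finrank 𝕜 (L i) ≤ 1) :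
    ∃ v : κ → V, (∀ i, v i ∈ L i) ∧ LinearIndependent 𝕜 v := by
  have := Fintype.ofFinite κ
  have hspan : ∀ i, ∃ v, L i = 𝕜 ∙ v := fun i => by
    have hi : 1 ≤ Module.finrank 𝕜 (L i) := by
      have := hL {i}
      rwa [Finset.card_singleton, Finset.iSup_singleton] at this
    obtain ⟨v, -, hv⟩ := finrank_eq_one_iff'.mp ((h i).antisymm hi)
    refine ⟨v, le_antisymm (fun w hw => ?_) ?_⟩
    · obtain ⟨c, hc⟩ := hv ⟨w, hw⟩
      exact Submodule.mem_span_singleton.mpr ⟨c, congrArg Subtype.val hc⟩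
    · exact (Submodule.span_singleton_le_iff_mem _ _).mpr v.2
  choose v hv using hspan
  refine ⟨v, fun i => hv i ▸ Submodule.mem_span_singleton_self _, ?_⟩
  rw [linearIndependent_iff_card_le_finrank_span, Set.finrank, Submodule.span_range_eq_iSup]
  have hsup : ⨆ i ∈ Finset.univ, L i = ⨆ i, 𝕜 ∙ v i := by simp [hv]
  exact hsup ▸ hL Finset.univ

/-- Rado's theorem: if some `L i` has dimension at least two, it is the sum of two proper
subspaces, and uncrossing shows that one of them may replace it. -/
theorem RadoCondition.exists_linearIndependent [Finite κ] [FiniteDimensional 𝕜 V]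
    {L : κ → Submodule 𝕜 V} (hL : RadoCondition L) :
    ∃ v : κ → V, (∀ i, v i ∈ L i) ∧ LinearIndependent 𝕜 v := by
  classical
  have := Fintype.ofFinite κ
  induction hm : ∑ i, Module.finrank 𝕜 (L i) using Nat.strong_induction_on generalizing L with
  | _ m ih =>
  by_cases h : ∀ i, Module.finrank 𝕜 (L i) ≤ 1
  · exact hL.exists_linearIndependent_of_finrank_le_one h
  obtain ⟨i, hi⟩ := not_forall.mp h
  have hreplace : ∀ X < L i, RadoCondition (Function.update L i X) →
      ∃ v : κ → V, (∀ i, v i ∈ L i) ∧ LinearIndependent 𝕜 v := fun X hX hLX => by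
    have hle : Function.update L i X ≤ L := update_le_self_iff.mpr hX.le
    have hlt : ∑ j, Module.finrank 𝕜 (Function.update L i X j) < m :=
      hm ▸ Finset.sum_lt_sum (fun j _ => Submodule.finrank_mono (hle j))
        ⟨i, Finset.mem_univ i,
          Submodule.finrank_lt_finrank_of_lt ((Function.update_self i X L).symm ▸ hX)⟩
    obtain ⟨v, hv, hindep⟩ := ih _ hlt hLX rfl
    exact ⟨v, fun j => hle j (hv j), hindep⟩
  obtain ⟨X, Y, hX, hY, hXY⟩ := exists_lt_lt_sup_eq_of_one_lt_finrank (L i) (not_le.mp hi)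
  exact (hL.update_left_or_right i hXY).elim (hreplace X hX) (hreplace Y hY)

end Rado

section MvPolynomial

open MvPolynomial

theorem derivation_aeval {R A M ι : Type*} [CommSemiring R] [CommSemiring A] [Algebra R A]
    [AddCommMonoid M] [Module A M] [Module R M] [Fintype ι] (D : Derivation R A M) (F : ι → A)
    (G : MvPolynomial ι R) : D (aeval F G) = ∑ k, aeval F (pderiv k G) • D (F k) := by
  classical
  induction G using MvPolynomial.induction_on with
  | C a => simp
  | add p q hp hq => simp only [map_add, hp, hq, add_smul, Finset.sum_add_distrib]
  | mul_X p i hp =>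
    simp only [map_mul, aeval_X, Derivation.leibniz, hp, pderiv_X, smul_eq_mul, map_add, add_smul,
      Finset.sum_add_distrib, Finset.smul_sum, mul_smul, add_comm (aeval F p • D (F i))]
    simp [Pi.single_apply, add_comm]

theorem pderiv_comm {R σ : Type*} [CommSemiring R] (i j : σ) (G : MvPolynomial σ R) :
    pderiv i (pderiv j G) = pderiv j (pderiv i G) := by
  classical
  ext m
  obtain rfl | hij := eq_or_ne i j
  · rfl
  · simp only [coeff_pderiv, Finsupp.add_apply, Finsupp.single_apply, hij, hij.symm, if_false,
      add_zero, add_right_comm m]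
    ring

theorem exists_eq_C_of_forall_pderiv_eq_zero {R σ : Type*} [CommRing R] [NoZeroDivisors R]
    [CharZero R] {G : MvPolynomial σ R} (h : ∀ k, pderiv k G = 0) : ∃ c, G = C c := by
  classical
  refine ⟨coeff 0 G, MvPolynomial.ext _ _ fun m => ?_⟩
  rw [coeff_C]
  split_ifs with hm
  · rw [hm]
  obtain ⟨k, hk⟩ : ∃ k, m k ≠ 0 := by
    by_contra! hm'
    exact hm (Finsupp.ext fun k => (hm' k).symm)
  have hle : Finsupp.single k 1 ≤ m := Finsupp.single_le_iff.mpr (Nat.one_le_iff_ne_zero.mpr hk)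
  have hcoeff := congrArg (coeff (m - Finsupp.single k 1)) (h k)
  rw [coeff_pderiv, coeff_zero, tsub_add_cancel_of_le hle] at hcoeff
  exact (mul_eq_zero.mp hcoeff).resolve_right (Nat.cast_add_one_ne_zero _)

theorem totalDegree_pderiv_lt {R σ : Type*} [CommSemiring R] {G : MvPolynomial σ R} {k : σ}
    (h : pderiv k G ≠ 0) : (pderiv k G).totalDegree < G.totalDegree := by
  obtain ⟨m, hm, hdeg⟩ := Finset.exists_mem_eq_sup (pderiv k G).support
    (Finset.nonempty_iff_ne_empty.mpr (mt support_eq_empty.mp h)) fun s => s.sum fun _ e => e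
  rw [mem_support_iff, coeff_pderiv] at hm
  have hle := le_totalDegree (mem_support_iff.mpr (left_ne_zero_of_mul hm))
  rw [Finsupp.sum_add_index' (fun _ => rfl) (fun _ _ _ => rfl), Finsupp.sum_single_index rfl] at hle
  exact hdeg.trans_lt hle

theorem exists_ne_zero_forall_eval_aeval_eq_zero {ι σ 𝕜 : Type*} [Fintype ι] [Fintype σ] [Field 𝕜]
    (hcard : Fintype.card σ ≤ Fintype.card ι) (i : σ) (a : 𝕜) (F : ι → MvPolynomial σ 𝕜) :
    ∃ G : MvPolynomial ι 𝕜, G ≠ 0 ∧ ∀ s : σ → 𝕜, s i = a → eval s (aeval F G) = 0 := by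
  classical
  let specialize : MvPolynomial σ 𝕜 →ₐ[𝕜] MvPolynomial {j // j ≠ i} 𝕜 :=
    aeval fun j => if h : j = i then C a else X ⟨j, h⟩
  have hdep : ¬ AlgebraicIndependent 𝕜 fun k => specialize (F k) := fun h => by
    have hdim := card_le_ringKrullDim_of_algebraicIndependent h
    rw [ringKrullDim_of_isNoetherianRing, ringKrullDim_eq_zero_of_field, zero_add,
      Nat.card_eq_fintype_card] at hdim
    simp only [ne_eq, Fintype.card_subtype_compl, Fintype.card_subtype_eq, Nat.cast_le] at hdim
    have hpos : 0 < Fintype.card σ := Fintype.card_pos_iff.mpr ⟨i⟩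
    omega
  simp only [algebraicIndependent_iff, not_forall, ← comp_aeval_apply] at hdep
  obtain ⟨G, hG, hG0⟩ := hdep
  refine ⟨G, hG0, fun s hs => ?_⟩
  have hspec : ∀ H, eval s H = eval (fun j : {j // j ≠ i} => s j) (specialize H) := fun H => by
    refine ((comp_aeval_apply _ (aeval fun j : {j // j ≠ i} => s j) H).trans
      (congrArg (fun f => aeval f H) (funext fun j => ?_))).symm
    by_cases hj : j = i
    · subst hj
      simp [hs]
    · simp [hj]
  rw [hspec, hG, map_zero]

end MvPolynomial

section Relations

variable {ι κ : Type*} {W : Matrix ι κ ℤ} {R S A : Type*} [CommRing R] [CommRing S] [CommRing A]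
  [Algebra A R]

/-- The linear relations with coefficients in `R` among the rows of the integer matrix `W`. -/
def relations [Fintype ι] (W : Matrix ι κ ℤ) (R : Type*) [CommRing R] : Submodule R (ι → R) :=
  LinearMap.ker (W.map (Int.cast : ℤ → R)).vecMulLinear

/-- The values on the rows of `W` of the linear forms with coefficients in `R`. For a Cayley
matrix these are the functions that are affine on each block, with a common linear part. -/
def columnSpace [Fintype κ] (W : Matrix ι κ ℤ) (R : Type*) [CommRing R] : Submodule R (ι → R) :=
  LinearMap.range (W.map (Int.cast : ℤ → R)).mulVecLin

section

variable [Fintype ι]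

theorem mem_relations {g : ι → R} : g ∈ relations W R ↔ ∀ t, ∑ k, g k * W k t = 0 := by
  simp [relations, funext_iff, Matrix.vecMul, dotProduct]

theorem map_mem_relations (φ : R →+* S) {g : ι → R} (hg : g ∈ relations W R) :
    (fun k => φ (g k)) ∈ relations W S :=
  mem_relations.mpr fun t => by simpa using congrArg φ (mem_relations.mp hg t)

theorem derivation_mem_relations (D : Derivation A R R) {g : ι → R} (hg : g ∈ relations W R) :
    (fun k => D (g k)) ∈ relations W R :=
  mem_relations.mpr fun t => by simpa [mul_comm] using congrArg D (mem_relations.mp hg t)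

end

section

variable [Fintype κ]

theorem mem_columnSpace {h : ι → R} :
    h ∈ columnSpace W R ↔ ∃ y : κ → R, ∀ k, h k = ∑ t, W k t * y t := by
  simp [columnSpace, funext_iff, Matrix.mulVec, dotProduct, eq_comm]

theorem derivation_mem_columnSpace (D : Derivation A R R) {h : ι → R}
    (hh : h ∈ columnSpace W R) : (fun k => D (h k)) ∈ columnSpace W R := by
  obtain ⟨y, hy⟩ := mem_columnSpace.mp hh
  exact mem_columnSpace.mpr ⟨fun t => D (y t), fun k => by simp [hy]⟩

end

section

variable [Fintype ι] [DecidableEq κ] {M : Matrix κ ι ℤ}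

theorem one_sub_mul_mem_relations [Fintype κ] [DecidableEq ι] (hM : M * W = 1) (k : ι) :
    (1 - W * M : Matrix ι ι ℤ) k ∈ relations W ℤ := by
  have h : (1 - W * M) * W = 0 := by
    rw [Matrix.sub_mul, Matrix.one_mul, Matrix.mul_assoc, hM, Matrix.mul_one, sub_self]
  exact mem_relations.mpr fun t => congrFun₂ h k t

theorem map_intCast_mul_map_intCast (hM : M * W = 1) :
    M.map (Int.cast : ℤ → R) * W.map (Int.cast : ℤ → R) = 1 := by
  have h := congrArg (fun N => N.map (Int.castRingHom R)) hM
  rw [Matrix.map_mul] at h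
  simpa using h

end

variable [Fintype ι] [Fintype κ]

theorem sum_mul_eq_zero {g h : ι → R} (hg : g ∈ relations W R) (hh : h ∈ columnSpace W R) :
    ∑ k, g k * h k = 0 := by
  obtain ⟨y, rfl⟩ := hh
  have hg' : g ᵥ* W.map Int.cast = 0 := hg
  exact (Matrix.dotProduct_mulVec g _ y).trans (by rw [hg', zero_dotProduct])

theorem sum_eq_zero_of_mem_relations {u : κ → ℤ} (hu : W *ᵥ u = 1)
    {c : ι → R} (hc : c ∈ relations W R) : ∑ k, c k = 0 := by
  have h := sum_mul_eq_zero hc (mem_columnSpace.mpr ⟨fun t => (u t : R), fun k => rfl⟩)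
  rw [← h]
  refine Finset.sum_congr rfl fun k _ => ?_
  have hk := congrArg (Int.cast : ℤ → R) (congrFun hu k)
  simp only [Matrix.mulVec, dotProduct, Int.cast_sum, Int.cast_mul, Pi.one_apply,
    Int.cast_one] at hk
  rw [hk, mul_one]

variable [DecidableEq κ] {M : Matrix κ ι ℤ}

theorem mem_columnSpace_of_forall_int (hM : M * W = 1) {h : ι → R}
    (hh : ∀ c ∈ relations W ℤ, ∑ k, (c k : R) * h k = 0) : h ∈ columnSpace W R := by
  classical
  refine mem_columnSpace.mpr ⟨fun t => ∑ k, M t k * h k, fun k => ?_⟩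
  have hk := hh _ (one_sub_mul_mem_relations hM k)
  simp only [Matrix.sub_apply, Matrix.one_apply, Matrix.mul_apply, Int.cast_sub, Int.cast_ite,
    Int.cast_one, Int.cast_zero, Int.cast_sum, Int.cast_mul, sub_mul, ite_mul, one_mul, zero_mul,
    Finset.sum_sub_distrib, Finset.sum_ite_eq, Finset.mem_univ, if_true, Finset.sum_mul] at hk
  rw [sub_eq_zero.mp hk, Finset.sum_comm]
  simp only [Finset.mul_sum, mul_assoc]

theorem mem_columnSpace_of_forall (hM : M * W = 1) {h : ι → R}
    (hh : ∀ c ∈ relations W A, ∑ k, algebraMap A R (c k) * h k = 0) : h ∈ columnSpace W R :=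
  mem_columnSpace_of_forall_int hM fun c hc => by
    simpa using hh _ (map_mem_relations (Int.castRingHom A) hc)

theorem finrank_relations_add_card (𝕜 : Type*) [Field 𝕜] (hM : M * W = 1) :
    Module.finrank 𝕜 (relations W 𝕜) + Fintype.card κ = Fintype.card ι := by
  have hsurj : LinearMap.range (W.map (Int.cast : ℤ → 𝕜)).vecMulLinear = ⊤ :=
    LinearMap.range_eq_top.mpr fun v => ⟨v ᵥ* M.map Int.cast, by
      simp [map_intCast_mul_map_intCast hM]⟩
  have h := LinearMap.finrank_range_add_finrank_ker (W.map (Int.cast : ℤ → 𝕜)).vecMulLinear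
  rw [hsurj, finrank_top, Module.finrank_fintype_fun_eq_card,
    Module.finrank_fintype_fun_eq_card, add_comm] at h
  exact h

end Relations

section GenericRelation

variable {ι κ 𝕜 R : Type*} [Fintype ι] [Field 𝕜] [CommRing R] [Algebra 𝕜 R]
  {W : Matrix ι κ ℤ} {g h : ι → R}

/-- A generic relation among the rows of `W`: a relation over a `𝕜`-algebra `R` that moves in all
directions of the space of relations over `𝕜` and specialises to every relation over `𝕜`. -/
structure IsGenericRelation (W : Matrix ι κ ℤ) (𝕜 : Type*) [Field 𝕜] [Algebra 𝕜 R]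
    (g : ι → R) : Prop where
  mem : g ∈ relations W R
  exists_derivation : ∀ c ∈ relations W 𝕜, ∃ D : Derivation 𝕜 R R,
    ∀ k, D (g k) = algebraMap 𝕜 R (c k)
  exists_specialization : ∀ c ∈ relations W 𝕜, ∃ φ : R →ₐ[𝕜] 𝕜, ∀ k, φ (g k) = c k

namespace IsGenericRelation

variable [Fintype κ] [DecidableEq κ] [IsDomain R] [CharZero R] {M : Matrix κ ι ℤ}

/-- Differentiate the relation `g * h` along a direction `c` and pair it with `h ^ m`: the terms
containing a derivative of `h` form, up to the factor `m`, a derivative of `h ^ m`. -/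
theorem pow_mem_columnSpace (hg : IsGenericRelation W 𝕜 g) (hM : M * W = 1)
    (hone : (1 : ι → R) ∈ columnSpace W R) (hh : h ∈ columnSpace W R)
    (hgh : g * h ∈ relations W R) (m : ℕ) : h ^ m ∈ columnSpace W R := by
  induction m with
  | zero => simpa using hone
  | succ m ih =>
    rcases Nat.eq_zero_or_pos m with rfl | hm
    · simpa using hh
    obtain ⟨r, rfl⟩ : ∃ r, m = r + 1 := ⟨m - 1, by omega⟩
    refine mem_columnSpace_of_forall (A := 𝕜) hM fun c hc => ?_
    obtain ⟨D, hD⟩ := hg.exists_derivation c hc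
    have hDgh := sum_mul_eq_zero (derivation_mem_relations D hgh) ih
    have hDpow : ((r + 1 : ℕ) : R) * ∑ k, (g * h) k * (h k ^ r * D (h k)) = 0 := by
      rw [← sum_mul_eq_zero hgh (derivation_mem_columnSpace D ih), Finset.mul_sum]
      refine Finset.sum_congr rfl fun k _ => ?_
      simp only [Pi.pow_apply, Derivation.leibniz_pow, Nat.add_sub_cancel, nsmul_eq_mul,
        smul_eq_mul]
      ring
    have hpow := (mul_eq_zero.mp hDpow).resolve_left (Nat.cast_ne_zero.mpr r.succ_ne_zero)
    calc ∑ k, algebraMap 𝕜 R (c k) * (h ^ (r + 1 + 1)) k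
        = ∑ k, D ((g * h) k) * (h ^ (r + 1)) k - ∑ k, (g * h) k * (h k ^ r * D (h k)) := by
          rw [← Finset.sum_sub_distrib]
          refine Finset.sum_congr rfl fun k _ => ?_
          simp only [Pi.mul_apply, Pi.pow_apply, Derivation.leibniz, hD, smul_eq_mul]
          ring
      _ = 0 := by rw [hDgh, hpow, sub_zero]

theorem eval_mem_columnSpace (hg : IsGenericRelation W 𝕜 g) (hM : M * W = 1)
    (hone : (1 : ι → R) ∈ columnSpace W R) (hh : h ∈ columnSpace W R)
    (hgh : g * h ∈ relations W R) (q : Polynomial R) :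
    (fun k => q.eval (h k)) ∈ columnSpace W R := by
  have hq : (fun k => q.eval (h k)) = ∑ m ∈ Finset.range (q.natDegree + 1), q.coeff m • h ^ m := by
    ext k
    simp [Polynomial.eval_eq_sum_range]
  rw [hq]
  exact Submodule.sum_mem _ fun m _ =>
    Submodule.smul_mem _ _ (hg.pow_mem_columnSpace hM hone hh hgh m)

theorem indicator_mem_columnSpace [DecidableEq R] (hg : IsGenericRelation W 𝕜 g)
    (hM : M * W = 1) (hone : (1 : ι → R) ∈ columnSpace W R) (hh : h ∈ columnSpace W R)
    (hgh : g * h ∈ relations W R) (α : R) :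
    (fun k => if h k = α then 1 else 0) ∈ columnSpace W 𝕜 := by
  set q : Polynomial R :=
    ∏ β ∈ (Finset.univ.image h).erase α, (Polynomial.X - Polynomial.C β)
  have hqα : q.eval α ≠ 0 := by
    rw [Polynomial.eval_prod, Finset.prod_ne_zero_iff]
    intro β hβ
    simpa using sub_ne_zero.mpr (Finset.ne_of_mem_erase hβ).symm
  have hq : ∀ k, q.eval (h k) = q.eval α * if h k = α then 1 else 0 := fun k => by
    split_ifs with hk
    · rw [hk, mul_one]
    · rw [mul_zero, Polynomial.eval_prod]
      exact Finset.prod_eq_zero (i := h k) (by simp [hk]) (by simp)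
  refine mem_columnSpace_of_forall (A := 𝕜) hM fun c hc => ?_
  have hc' := map_mem_relations (algebraMap 𝕜 R) hc
  have hsum := sum_mul_eq_zero hc' (hg.eval_mem_columnSpace hM hone hh hgh q)
  have hfactor : q.eval α * algebraMap 𝕜 R (∑ k, c k * if h k = α then 1 else 0) = 0 := by
    rw [← hsum, map_sum, Finset.mul_sum]
    refine Finset.sum_congr rfl fun k _ => ?_
    simp only [hq, map_mul, apply_ite (algebraMap 𝕜 R), map_one, map_zero]
    ring
  exact (map_eq_zero_iff _ (algebraMap 𝕜 R).injective).mp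
    ((mul_eq_zero.mp hfactor).resolve_left hqα)

end IsGenericRelation

end GenericRelation

section ToricMonomial

variable {ι κ H : Type*} [Fintype κ] [CommGroup H] {W : Matrix ι κ ℤ}

/-- The values at a point `z` of the torus of the Laurent monomials given by the rows of `W`. -/
def toricMonomial (W : Matrix ι κ ℤ) (z : κ → H) (k : ι) : H := ∏ t, z t ^ W k t

theorem toricMonomial_inv (z : κ → H) (k : ι) :
    toricMonomial W z⁻¹ k = (toricMonomial W z k)⁻¹ := by
  simp [toricMonomial]

theorem toricMonomial_mul (z z' : κ → H) (k : ι) :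
    toricMonomial W (z * z') k = toricMonomial W z k * toricMonomial W z' k := by
  simp [toricMonomial, mul_zpow, Finset.prod_mul_distrib]

theorem prod_zpow_eq_zpow_sum {α : Type*} (s : Finset α) (f : α → ℤ) (a : H) :
    ∏ i ∈ s, a ^ f i = a ^ ∑ i ∈ s, f i :=
  (map_sum (zmultiplesHom (Additive H) (Additive.ofMul a)) f s).symm

theorem toricMonomial_zpow (u : κ → ℤ) (a : H) (k : ι) :
    toricMonomial W (fun t => a ^ u t) k = a ^ (W *ᵥ u) k := by
  simp only [toricMonomial, ← zpow_mul, mul_comm (u _)]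
  exact prod_zpow_eq_zpow_sum _ _ a

theorem toricMonomial_toricMonomial {μ : Type*} [Fintype μ] (M : Matrix κ μ ℤ) (p : μ → H) :
    toricMonomial W (toricMonomial M p) = toricMonomial (W * M) p := by
  ext k
  simp only [toricMonomial, ← Finset.prod_zpow, ← zpow_mul]
  rw [Finset.prod_comm]
  refine Finset.prod_congr rfl fun l _ => ?_
  simp only [mul_comm (M _ l), prod_zpow_eq_zpow_sum, Matrix.mul_apply]

theorem toricMonomial_one [DecidableEq κ] (p : κ → H) : toricMonomial 1 p = p := by
  ext k
  rw [toricMonomial, Fintype.prod_eq_single k fun l hl => by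
    rw [Matrix.one_apply_ne' hl, zpow_zero], Matrix.one_apply_eq, zpow_one]

variable [Fintype ι]

theorem prod_toricMonomial_zpow {H : Type*} [CommGroup H] (z : κ → H) {c : ι → ℤ}
    (hc : c ∈ relations W ℤ) : ∏ k, toricMonomial W z k ^ c k = 1 := by
  simp only [toricMonomial, ← Finset.prod_zpow, ← zpow_mul]
  rw [Finset.prod_comm]
  refine Finset.prod_eq_one fun t _ => ?_
  have ht := mem_relations.mp hc t
  simp only [Int.cast_id, mul_comm (c _)] at ht
  rw [prod_zpow_eq_zpow_sum, ht, zpow_zero]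

variable [DecidableEq κ] {M : Matrix κ ι ℤ}

theorem toricMonomial_injective (hM : M * W = 1) :
    Function.Injective (toricMonomial W : (κ → H) → ι → H) :=
  Function.LeftInverse.injective (g := toricMonomial M) fun z => by
    rw [toricMonomial_toricMonomial, hM, toricMonomial_one]

theorem exists_toricMonomial_eq (hM : M * W = 1) {p : ι → H}
    (hp : ∀ c ∈ relations W ℤ, ∏ k, p k ^ c k = 1) : ∃ z : κ → H, toricMonomial W z = p := by
  classical
  refine ⟨toricMonomial M p, funext fun k => ?_⟩
  have hprod := hp _ (one_sub_mul_mem_relations hM k)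
  simp only [Matrix.sub_apply, zpow_sub, Finset.prod_mul_distrib, Finset.prod_inv_distrib,
    mul_inv_eq_one] at hprod
  rw [toricMonomial_toricMonomial, ← congrFun (toricMonomial_one p) k]
  exact hprod.symm

end ToricMonomial

section Parametrization

open MvPolynomial

variable {ι κ : Type*} [Fintype ι] {W : Matrix ι κ ℤ} {𝕜 : Type*} [Field 𝕜]

/-- The polynomial functions of a point of the torus and a relation, the latter being given by its
coordinates in a basis. -/
abbrev ParamRing (W : Matrix ι κ ℤ) (𝕜 : Type*) [Field 𝕜] : Type _ :=
  MvPolynomial (κ ⊕ Fin (Module.finrank 𝕜 (relations W 𝕜))) 𝕜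

/-- The point of the parameter space given by a point of the torus and a relation. -/
noncomputable def paramPoint (z : κ → 𝕜) (c : relations W 𝕜) :
    κ ⊕ Fin (Module.finrank 𝕜 (relations W 𝕜)) → 𝕜 :=
  Sum.elim z ((Module.finBasis 𝕜 (relations W 𝕜)).repr c)

/-- The universal relation among the rows of `W`. -/
noncomputable def genericRelation (W : Matrix ι κ ℤ) (𝕜 : Type*) [Field 𝕜] (k : ι) :
    ParamRing W 𝕜 :=
  ∑ l, C ((Module.finBasis 𝕜 (relations W 𝕜) l : ι → 𝕜) k) * X (Sum.inr l)

theorem sum_finBasis_apply_mul_repr (c : relations W 𝕜) (k : ι) :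
    ∑ l, (Module.finBasis 𝕜 (relations W 𝕜) l : ι → 𝕜) k *
      (Module.finBasis 𝕜 (relations W 𝕜)).repr c l = (c : ι → 𝕜) k := by
  conv_rhs => rw [← (Module.finBasis 𝕜 (relations W 𝕜)).sum_repr c]
  simp only [Submodule.coe_sum, Submodule.coe_smul, Finset.sum_apply, Pi.smul_apply, smul_eq_mul,
    mul_comm]

theorem eval_genericRelation (z : κ → 𝕜) (c : relations W 𝕜) (k : ι) :
    eval (paramPoint z c) (genericRelation W 𝕜 k) = (c : ι → 𝕜) k := by
  simp [genericRelation, paramPoint, sum_finBasis_apply_mul_repr]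

theorem genericRelation_mem_relations : genericRelation W 𝕜 ∈ relations W (ParamRing W 𝕜) := by
  have h : genericRelation W 𝕜 = ∑ l, (X (Sum.inr l) : ParamRing W 𝕜) •
      fun k => (C ((Module.finBasis 𝕜 (relations W 𝕜) l : ι → 𝕜) k) : ParamRing W 𝕜) := by
    ext1 k
    simp [genericRelation, mul_comm]
  rw [h]
  exact Submodule.sum_mem _ fun l _ => Submodule.smul_mem _ _
    (map_mem_relations C (Module.finBasis 𝕜 (relations W 𝕜) l).2)

theorem pderiv_inl_genericRelation (t : κ) (k : ι) :
    pderiv (Sum.inl t) (genericRelation W 𝕜 k) = 0 := by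
  simp [genericRelation]

/-- The derivative along a relation `c`, with the point of the torus held fixed. -/
noncomputable def relationDerivation (c : relations W 𝕜) :
    Derivation 𝕜 (ParamRing W 𝕜) (ParamRing W 𝕜) :=
  mkDerivation 𝕜 (Sum.elim 0 fun l => C ((Module.finBasis 𝕜 (relations W 𝕜)).repr c l))

theorem relationDerivation_genericRelation (c : relations W 𝕜) (k : ι) :
    relationDerivation c (genericRelation W 𝕜 k) = C ((c : ι → 𝕜) k) := by
  rw [relationDerivation, ← sum_finBasis_apply_mul_repr c k, map_sum]
  simp [genericRelation, mkDerivation_X]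

theorem isGenericRelation_genericRelation :
    IsGenericRelation W 𝕜 (genericRelation W 𝕜) where
  mem := genericRelation_mem_relations
  exists_derivation c hc := ⟨relationDerivation ⟨c, hc⟩, relationDerivation_genericRelation _⟩
  exists_specialization c hc :=
    ⟨aeval (paramPoint 0 ⟨c, hc⟩), fun k => eval_genericRelation 0 ⟨c, hc⟩ k⟩

variable [Fintype κ]

/-- The vectors `f` such that the system with coefficients `f` is singular at the point `z` of the
torus. For a Cayley matrix, `z` consists of a left null vector of the Jacobian matrix with nonzero
entries, and of the singular root. -/
def IsSingularAt (W : Matrix ι κ ℤ) (z : κ → 𝕜ˣ) (f : ι → 𝕜) : Prop :=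
  (fun k => f k * toricMonomial W z k) ∈ relations W 𝕜

/-- The systems that are singular at some point of the torus. -/
def singularLocus (W : Matrix ι κ ℤ) (𝕜 : Type*) [Field 𝕜] : Set (ι → 𝕜) :=
  {f | ∃ z : κ → 𝕜ˣ, IsSingularAt W z f}

/-- Adding this constant to the entries of `W` makes them nonnegative. -/
def exponentShift (W : Matrix ι κ ℤ) : ℕ := ∑ k, ∑ t, (W k t).natAbs

/-- The Laurent monomials given by the rows of `W`, made polynomial by a common monomial factor. -/
noncomputable def genericMonomial (W : Matrix ι κ ℤ) (𝕜 : Type*) [Field 𝕜] (k : ι) :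
    ParamRing W 𝕜 :=
  monomial (Finsupp.equivFunOnFinite.symm
    (Sum.elim (fun t => (W k t + exponentShift W).toNat) 0)) 1

/-- The Horn–Kapranov parametrization of the singular locus, on coordinate rings: a relation `c`
and a point `z` of the torus are sent to the system with coefficients `c k * z ^ W k`, which is
singular at `z⁻¹`. -/
noncomputable def hornKapranov (W : Matrix ι κ ℤ) (𝕜 : Type*) [Field 𝕜] :
    MvPolynomial ι 𝕜 →ₐ[𝕜] ParamRing W 𝕜 :=
  aeval (genericMonomial W 𝕜 * genericRelation W 𝕜)

theorem toNat_add_exponentShift (W : Matrix ι κ ℤ) (k : ι) (t : κ) :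
    ((W k t + exponentShift W).toNat : ℤ) = W k t + exponentShift W := by
  refine Int.toNat_of_nonneg ?_
  have h₁ : (W k t).natAbs ≤ ∑ t, (W k t).natAbs :=
    Finset.single_le_sum (f := fun t => (W k t).natAbs) (fun _ _ => Nat.zero_le _)
      (Finset.mem_univ t)
  have h₂ : ∑ t, (W k t).natAbs ≤ exponentShift W :=
    Finset.single_le_sum (f := fun k => ∑ t, (W k t).natAbs) (fun _ _ => Nat.zero_le _)
      (Finset.mem_univ k)
  omega

theorem eval_genericMonomial (z : κ → 𝕜ˣ) (c : relations W 𝕜) (k : ι) :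
    eval (paramPoint (fun t => (z t : 𝕜)) c) (genericMonomial W 𝕜 k) =
      toricMonomial W z k * ∏ t, (z t : 𝕜) ^ exponentShift W := by
  rw [genericMonomial, eval_monomial, one_mul, Finsupp.prod_fintype _ _ fun _ => pow_zero _,
    Fintype.prod_sum_type, toricMonomial, Units.coe_prod, ← Finset.prod_mul_distrib]
  simp only [Finsupp.coe_equivFunOnFinite_symm, Sum.elim_inr, Pi.zero_apply, pow_zero,
    Finset.prod_const_one, mul_one, Sum.elim_inl, paramPoint]
  refine Finset.prod_congr rfl fun t _ => ?_
  rw [← Units.val_pow_eq_pow_val, ← Units.val_pow_eq_pow_val, ← zpow_natCast,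
    toNat_add_exponentShift, zpow_add, zpow_natCast, Units.val_mul]

theorem genericMonomial_ne_zero (k : ι) : genericMonomial W 𝕜 k ≠ 0 :=
  monomial_eq_zero.not.mpr one_ne_zero

theorem hornKapranov_X (k : ι) :
    hornKapranov W 𝕜 (X k) = genericMonomial W 𝕜 k * genericRelation W 𝕜 k :=
  aeval_X _ k

theorem relationDerivation_genericMonomial (c : relations W 𝕜) (k : ι) :
    relationDerivation c (genericMonomial W 𝕜 k) = 0 := by
  rw [relationDerivation, genericMonomial, mkDerivation_monomial,
    Finsupp.sum_fintype _ _ (by simp), Fintype.sum_sum_type]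
  simp

theorem X_mul_pderiv_genericMonomial (t : κ) (k : ι) :
    X (Sum.inl t) * pderiv (Sum.inl t) (genericMonomial W 𝕜 k) =
      ((W k t : ParamRing W 𝕜) + (exponentShift W : ParamRing W 𝕜)) *
        genericMonomial W 𝕜 k := by
  have h := congrArg (Int.cast : ℤ → ParamRing W 𝕜) (toNat_add_exponentShift W k t)
  push_cast at h
  rw [genericMonomial, X_mul_pderiv_monomial, nsmul_eq_mul, ← h]
  rfl

theorem eval_hornKapranov (z : κ → 𝕜ˣ) (c : relations W 𝕜) (G : MvPolynomial ι 𝕜) :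
    eval (paramPoint (fun t => (z t : 𝕜)) c) (hornKapranov W 𝕜 G) =
      eval (fun k => toricMonomial W z k * (∏ t, (z t : 𝕜) ^ exponentShift W) *
        (c : ι → 𝕜) k) G := by
  refine (comp_aeval_apply _ (aeval (paramPoint (fun t => (z t : 𝕜)) c)) G).trans ?_
  refine congrArg (fun f => aeval f G) (funext fun k => ?_)
  exact (map_mul _ _ _).trans (congrArg₂ (· * ·) (eval_genericMonomial z c k)
    (eval_genericRelation _ c k))

/-- The gradient of `G` along the Horn–Kapranov parametrization, in coordinates in which the
parametrized system is its relation. -/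
noncomputable def scaledGradient (W : Matrix ι κ ℤ) (G : MvPolynomial ι 𝕜) (k : ι) :
    ParamRing W 𝕜 :=
  genericMonomial W 𝕜 k * hornKapranov W 𝕜 (pderiv k G)

section

variable {G : MvPolynomial ι 𝕜}

theorem scaledGradient_mem_columnSpace [DecidableEq κ] {M : Matrix κ ι ℤ} (hM : M * W = 1)
    (hG : hornKapranov W 𝕜 G = 0) : scaledGradient W G ∈ columnSpace W (ParamRing W 𝕜) := by
  refine mem_columnSpace_of_forall (A := 𝕜) hM fun c hc => ?_
  have hD := congrArg (relationDerivation ⟨c, hc⟩) hG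
  rw [hornKapranov, derivation_aeval, map_zero] at hD
  rw [← hD]
  refine Finset.sum_congr rfl fun k _ => ?_
  rw [Pi.mul_apply, Derivation.leibniz, relationDerivation_genericRelation,
    relationDerivation_genericMonomial, smul_zero, add_zero, scaledGradient, hornKapranov,
    smul_eq_mul, smul_eq_mul, algebraMap_eq]
  ring

theorem genericRelation_mul_scaledGradient_mem_relations [DecidableEq κ] {M : Matrix κ ι ℤ}
    (hM : M * W = 1) (hG : hornKapranov W 𝕜 G = 0) :
    genericRelation W 𝕜 * scaledGradient W G ∈ relations W (ParamRing W 𝕜) := by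
  refine mem_relations.mpr fun t => ?_
  have hpair := sum_mul_eq_zero genericRelation_mem_relations
    (scaledGradient_mem_columnSpace hM hG)
  have hD := congrArg (fun F => X (Sum.inl t) * pderiv (Sum.inl t) F) hG
  simp only [hornKapranov, derivation_aeval, map_zero, mul_zero, Finset.mul_sum] at hD
  calc _ = ∑ k, (W k t + exponentShift W) * (genericRelation W 𝕜 k * scaledGradient W G k) -
        exponentShift W * ∑ k, genericRelation W 𝕜 k * scaledGradient W G k := by
          rw [Finset.mul_sum, ← Finset.sum_sub_distrib]
          refine Finset.sum_congr rfl fun k _ => ?_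
          rw [Pi.mul_apply]
          ring
    _ = 0 := by
          rw [hpair, mul_zero, sub_zero, ← hD]
          refine Finset.sum_congr rfl fun k _ => ?_
          rw [Pi.mul_apply, Derivation.leibniz, pderiv_inl_genericRelation, smul_zero, zero_add,
            smul_eq_mul, smul_eq_mul, scaledGradient, hornKapranov]
          linear_combination (-genericRelation W 𝕜 k * aeval
            (genericMonomial W 𝕜 * genericRelation W 𝕜) (pderiv k G)) *
              X_mul_pderiv_genericMonomial (W := W) (𝕜 := 𝕜) t k

end

end Parametrization

section SingularLocus

open MvPolynomial

variable {ι κ : Type*} [Fintype ι] [Fintype κ] {W : Matrix ι κ ℤ} {𝕜 : Type*} [Field 𝕜]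
  {f : ι → 𝕜} {z : κ → 𝕜ˣ} {G : MvPolynomial ι 𝕜}

theorem IsSingularAt.exists_eval_hornKapranov_eq (hf : IsSingularAt W z f) :
    ∃ c : relations W 𝕜, ∀ G,
      eval (paramPoint (fun t => (z⁻¹ t : 𝕜)) c) (hornKapranov W 𝕜 G) = eval f G := by
  set ρ : 𝕜 := ∏ t, (z⁻¹ t : 𝕜) ^ exponentShift W
  have hρ : ρ ≠ 0 := Finset.prod_ne_zero_iff.mpr fun t _ => pow_ne_zero _ (Units.ne_zero _)
  refine ⟨ρ⁻¹ • ⟨_, hf⟩, fun G => ?_⟩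
  rw [eval_hornKapranov]
  refine congrArg (fun f => eval f G) (funext fun k => ?_)
  change _ * ρ * (ρ⁻¹ * (f k * toricMonomial W z k)) = f k
  rw [toricMonomial_inv, Units.val_inv_eq_inv_val]
  field_simp

theorem eval_mem_singularLocus (z : κ → 𝕜ˣ) (c : relations W 𝕜) :
    (fun k => toricMonomial W z k * (∏ t, (z t : 𝕜) ^ exponentShift W) * (c : ι → 𝕜) k) ∈
      singularLocus W 𝕜 := by
  refine ⟨z⁻¹, ?_⟩
  unfold IsSingularAt
  convert Submodule.smul_mem _ (∏ t, (z t : 𝕜) ^ exponentShift W) c.2 using 1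
  ext k
  rw [toricMonomial_inv, Units.val_inv_eq_inv_val, Pi.smul_apply, smul_eq_mul]
  field_simp

theorem hornKapranov_eq_zero_iff [Infinite 𝕜] :
    hornKapranov W 𝕜 G = 0 ↔ ∀ f ∈ singularLocus W 𝕜, eval f G = 0 := by
  constructor
  · rintro hG f ⟨z, hf⟩
    obtain ⟨c, hc⟩ := hf.exists_eval_hornKapranov_eq
    rw [← hc, hG, map_zero]
  · intro hG
    have hprod : (∏ t, X (Sum.inl t)) * hornKapranov W 𝕜 G = 0 := by
      refine MvPolynomial.funext fun s => ?_
      rw [map_mul, map_prod, map_zero, mul_eq_zero, Finset.prod_eq_zero_iff]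
      refine or_iff_not_imp_left.mpr fun hs => ?_
      replace hs : ∀ t, s (Sum.inl t) ≠ 0 := by simpa using hs
      set c := (Module.finBasis 𝕜 (relations W 𝕜)).equivFun.symm (s ∘ Sum.inr)
      have hpoint : s = paramPoint (fun t => (Units.mk0 _ (hs t) : 𝕜)) c := by
        ext (t | l)
        · rfl
        · exact (congrFun ((Module.finBasis 𝕜 (relations W 𝕜)).equivFun.apply_symm_apply
            (s ∘ Sum.inr)) l).symm
      rw [hpoint, eval_hornKapranov]
      exact hG _ (eval_mem_singularLocus _ _)
    exact (mul_eq_zero.mp hprod).resolve_left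
      (Finset.prod_ne_zero_iff.mpr fun t _ => X_ne_zero _)

theorem IsSingularAt.mul_zpow {u : κ → ℤ} (hu : W *ᵥ u = 1) (hf : IsSingularAt W z f) (a : 𝕜ˣ) :
    IsSingularAt W (z * fun t => a ^ u t) f := by
  unfold IsSingularAt
  convert Submodule.smul_mem _ (a : 𝕜) hf using 1
  ext k
  rw [toricMonomial_mul, toricMonomial_zpow, hu, Pi.one_apply, zpow_one, Units.val_mul,
    Pi.smul_apply, smul_eq_mul]
  ring

/-- By rescaling, one of the torus parameters may be set to `1`, which leaves fewer parameters than
there are coefficients. -/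
theorem exists_ne_zero_hornKapranov_eq_zero [Infinite 𝕜] [DecidableEq κ] {M : Matrix κ ι ℤ}
    (hM : M * W = 1) {u : κ → ℤ} (hu : W *ᵥ u = 1) {t₀ : κ} (ht₀ : u t₀ = 1) :
    ∃ G : MvPolynomial ι 𝕜, G ≠ 0 ∧ hornKapranov W 𝕜 G = 0 := by
  have hcard : Fintype.card (κ ⊕ Fin (Module.finrank 𝕜 (relations W 𝕜))) ≤ Fintype.card ι := by
    rw [Fintype.card_sum, Fintype.card_fin, add_comm, finrank_relations_add_card 𝕜 hM]
  obtain ⟨G, hG0, hG⟩ := exists_ne_zero_forall_eval_aeval_eq_zero hcard (Sum.inl t₀) 1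
    (genericMonomial W 𝕜 * genericRelation W 𝕜)
  refine ⟨G, hG0, hornKapranov_eq_zero_iff.mpr ?_⟩
  rintro f ⟨z, hf⟩
  obtain ⟨c, hc⟩ := (hf.mul_zpow hu (z t₀)⁻¹).exists_eval_hornKapranov_eq
  rw [← hc, hornKapranov]
  exact hG _ (by simp [paramPoint, ht₀])

end SingularLocus

section Nondefective

open MvPolynomial

variable {ι κ : Type*} [Fintype ι] [Fintype κ] {W : Matrix ι κ ℤ} {𝕜 : Type*} [Field 𝕜]
  {f : ι → 𝕜} {z : κ → 𝕜ˣ} {G : MvPolynomial ι 𝕜}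

/-- The gradient of every equation of the singular locus is, at a system that is singular at `z`,
proportional to the vector of the monomials at `z`. -/
def IsNondefective (W : Matrix ι κ ℤ) (𝕜 : Type*) [Field 𝕜] : Prop :=
  ∀ G : MvPolynomial ι 𝕜, hornKapranov W 𝕜 G = 0 → ∃ η, ∀ k, scaledGradient W G k = η

namespace IsNondefective

theorem exists_eval_pderiv_eq (hW : IsNondefective W 𝕜) (hG : hornKapranov W 𝕜 G = 0)
    (hf : IsSingularAt W z f) :
    ∃ η : 𝕜, ∀ k, eval f (pderiv k G) = η * toricMonomial W z k := by
  obtain ⟨η, hη⟩ := hW G hG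
  obtain ⟨c, hc⟩ := hf.exists_eval_hornKapranov_eq
  set ρ : 𝕜 := ∏ t, (z⁻¹ t : 𝕜) ^ exponentShift W
  have hρ : ρ ≠ 0 := Finset.prod_ne_zero_iff.mpr fun t _ => pow_ne_zero _ (Units.ne_zero _)
  refine ⟨ρ⁻¹ * eval (paramPoint (fun t => (z⁻¹ t : 𝕜)) c) η, fun k => ?_⟩
  have h : eval (paramPoint (fun t => (z⁻¹ t : 𝕜)) c) (genericMonomial W 𝕜 k) =
      ((toricMonomial W z k : 𝕜ˣ) : 𝕜)⁻¹ * ρ := by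
    rw [eval_genericMonomial, toricMonomial_inv, Units.val_inv_eq_inv_val]
  rw [← hη k, scaledGradient, map_mul, hc, h]
  field_simp

theorem hornKapranov_pderiv_eq_zero (hW : IsNondefective W 𝕜) (hG : hornKapranov W 𝕜 G = 0)
    {k₀ : ι} (h₀ : hornKapranov W 𝕜 (pderiv k₀ G) = 0) (k : ι) :
    hornKapranov W 𝕜 (pderiv k G) = 0 := by
  obtain ⟨η, hη⟩ := hW G hG
  have h : scaledGradient W G k = 0 := by rw [hη, ← hη k₀, scaledGradient, h₀, mul_zero]
  exact (mul_eq_zero.mp h).resolve_left (genericMonomial_ne_zero k)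

section

variable [CharZero 𝕜]

theorem eq_zero_of_forall_pderiv_eq_zero (hG : hornKapranov W 𝕜 G = 0)
    (h : ∀ k, pderiv k G = 0) : G = 0 := by
  obtain ⟨c, rfl⟩ := exists_eq_C_of_forall_pderiv_eq_zero h
  have hc : c = 0 := by simpa [hornKapranov] using hG
  rw [hc, map_zero]

theorem eq_zero_of_pderiv_eq_zero (hW : IsNondefective W 𝕜) (hG : hornKapranov W 𝕜 G = 0)
    {k₀ : ι} (h₀ : pderiv k₀ G = 0) : G = 0 := by
  induction hN : G.totalDegree using Nat.strong_induction_on generalizing G with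
  | _ N ih =>
    refine eq_zero_of_forall_pderiv_eq_zero hG fun k => ?_
    by_contra hk
    exact hk (ih _ (hN ▸ totalDegree_pderiv_lt hk)
      (hW.hornKapranov_pderiv_eq_zero hG (by rw [h₀, map_zero]) k)
      (by rw [pderiv_comm, h₀, map_zero]) rfl)

theorem exists_forall_hornKapranov_pderiv_ne_zero (hW : IsNondefective W 𝕜)
    (hex : ∃ G : MvPolynomial ι 𝕜, G ≠ 0 ∧ hornKapranov W 𝕜 G = 0) :
    ∃ G : MvPolynomial ι 𝕜, hornKapranov W 𝕜 G = 0 ∧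
      ∀ k, hornKapranov W 𝕜 (pderiv k G) ≠ 0 := by
  obtain ⟨G, ⟨hG₀, hG⟩, hmin⟩ := exists_minimalFor_of_wellFoundedLT
    (fun G : MvPolynomial ι 𝕜 => G ≠ 0 ∧ hornKapranov W 𝕜 G = 0) totalDegree hex
  refine ⟨G, hG, fun k₀ h₀ => hG₀ (eq_zero_of_forall_pderiv_eq_zero hG fun k => ?_)⟩
  by_contra hk
  have hlt := totalDegree_pderiv_lt hk
  exact hlt.not_ge (hmin ⟨hk, hW.hornKapranov_pderiv_eq_zero hG h₀ k⟩ hlt.le)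

theorem algebraicIndependent_mk_X (hW : IsNondefective W 𝕜) (k₀ : ι) :
    AlgebraicIndependent 𝕜 fun k : {k : ι // k ≠ k₀} =>
      Ideal.Quotient.mkₐ 𝕜 (RingHom.ker (hornKapranov W 𝕜)) (X k.1) := by
  refine algebraicIndependent_iff.mpr fun P hP => ?_
  have hmk : Ideal.Quotient.mkₐ 𝕜 (RingHom.ker (hornKapranov W 𝕜))
      (rename Subtype.val P) = 0 := by
    rwa [aeval_unique (Ideal.Quotient.mkₐ 𝕜 (RingHom.ker (hornKapranov W 𝕜))), aeval_rename]
  have hker : hornKapranov W 𝕜 (rename Subtype.val P) = 0 := Ideal.Quotient.eq_zero_iff_mem.mp hmk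
  have hpderiv : pderiv k₀ (rename (Subtype.val : {k : ι // k ≠ k₀} → ι) P) = 0 := by
    classical
    refine pderiv_eq_zero_of_notMem_vars fun hmem => ?_
    obtain ⟨k, -, hk⟩ := Finset.mem_image.mp (vars_rename Subtype.val P hmem)
    exact k.2 hk
  exact (map_eq_zero_iff _ (rename_injective _ Subtype.val_injective)).mp
    (hW.eq_zero_of_pderiv_eq_zero hker hpderiv)

theorem ringKrullDim_quotient_ker_hornKapranov (hW : IsNondefective W 𝕜) [Nonempty ι]
    (hex : ∃ G : MvPolynomial ι 𝕜, G ≠ 0 ∧ hornKapranov W 𝕜 G = 0) :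
    ringKrullDim (MvPolynomial ι 𝕜 ⧸ RingHom.ker (hornKapranov W 𝕜)) =
      ((Fintype.card ι - 1 : ℕ) : WithBot ℕ∞) := by
  classical
  have := RingHom.ker_isPrime (hornKapranov W 𝕜)
  refine le_antisymm ?_ ?_
  · obtain ⟨G, hG₀, hG⟩ := hex
    have h := ringKrullDim_succ_le_of_surjective
      (Ideal.Quotient.mk (RingHom.ker (hornKapranov W 𝕜))) Ideal.Quotient.mk_surjective
      (mem_nonZeroDivisors_of_ne_zero hG₀) (Ideal.Quotient.eq_zero_iff_mem.mpr hG)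
    rw [MvPolynomial.ringKrullDim_of_isNoetherianRing, ringKrullDim_eq_zero_of_field, zero_add,
      Nat.card_eq_fintype_card, ← Nat.sub_add_cancel Fintype.card_pos, Nat.cast_add,
      Nat.cast_one] at h
    exact ENat.WithBot.add_le_add_one_right_iff.mp h
  · have h := card_le_ringKrullDim_of_algebraicIndependent
      (hW.algebraicIndependent_mk_X (Classical.arbitrary ι))
    rwa [Fintype.card_subtype_compl, Fintype.card_subtype_eq] at h

end

section

theorem hornKapranov_prod_pderiv_pow_sub_eq_zero [Infinite 𝕜] (hW : IsNondefective W 𝕜)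
    {u : κ → ℤ} (hu : W *ᵥ u = 1) (hG : hornKapranov W 𝕜 G = 0) {p q : ι → ℕ}
    (hpq : (fun k => (p k : ℤ) - q k) ∈ relations W ℤ) :
    hornKapranov W 𝕜 (∏ k, pderiv k G ^ p k - ∏ k, pderiv k G ^ q k) = 0 := by
  have hsum : ∑ k, p k = ∑ k, q k := by
    have h := sum_eq_zero_of_mem_relations hu hpq
    rw [Finset.sum_sub_distrib, sub_eq_zero] at h
    exact_mod_cast h
  refine hornKapranov_eq_zero_iff.mpr ?_
  rintro f ⟨z, hf⟩
  obtain ⟨η, hη⟩ := hW.exists_eval_pderiv_eq hG hf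
  have hprod : ∏ k, toricMonomial W z k ^ p k = ∏ k, toricMonomial W z k ^ q k := by
    have h := prod_toricMonomial_zpow z hpq
    simpa only [zpow_sub, zpow_natCast, Finset.prod_mul_distrib, Finset.prod_inv_distrib,
      mul_inv_eq_one] using h
  have hprod' := congrArg (Units.val : 𝕜ˣ → 𝕜) hprod
  simp only [Units.coe_prod, Units.val_pow_eq_pow_val] at hprod'
  simp only [map_sub, map_prod, map_pow, hη, mul_pow, Finset.prod_mul_distrib,
    Finset.prod_pow_eq_pow_sum, hsum, hprod', sub_self]

end

end IsNondefective

section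

variable [DecidableEq κ] {M : Matrix κ ι ℤ}

theorem mul_eval_pderiv_mem_relations (hM : M * W = 1) (hG : hornKapranov W 𝕜 G = 0)
    (hf : ∀ F, hornKapranov W 𝕜 F = 0 → eval f F = 0) :
    (fun k => f k * eval f (pderiv k G)) ∈ relations W 𝕜 := by
  refine mem_relations.mpr fun t => ?_
  have h : hornKapranov W 𝕜 (∑ k, X k * pderiv k G * (W k t : MvPolynomial ι 𝕜)) = 0 := by
    rw [← mem_relations.mp (genericRelation_mul_scaledGradient_mem_relations hM hG) t, map_sum]
    refine Finset.sum_congr rfl fun k _ => ?_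
    rw [map_mul, map_mul, hornKapranov_X, map_intCast, Pi.mul_apply, scaledGradient]
    ring
  simpa using hf _ h

/-- The partial derivatives satisfy the binomial equations of the toric variety on the singular
locus, hence on its closure. -/
theorem IsNondefective.exists_isSingularAt [Infinite 𝕜] (hW : IsNondefective W 𝕜) (hM : M * W = 1)
    {u : κ → ℤ} (hu : W *ᵥ u = 1) (hG : hornKapranov W 𝕜 G = 0)
    (hf : ∀ F, hornKapranov W 𝕜 F = 0 → eval f F = 0) (hd : ∀ k, eval f (pderiv k G) ≠ 0) :
    ∃ z : κ → 𝕜ˣ, (∀ k, eval f (pderiv k G) = toricMonomial W z k) ∧ IsSingularAt W z f := by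
  obtain ⟨z, hz⟩ := exists_toricMonomial_eq hM (p := fun k => Units.mk0 _ (hd k)) fun c hc => by
    have hneg : ∀ k, ((c k).toNat : ℤ) - ((-c k).toNat : ℕ) = c k := fun k => by omega
    have h := hf _ (hW.hornKapranov_prod_pderiv_pow_sub_eq_zero hu hG
      (p := fun k => (c k).toNat) (q := fun k => (-c k).toNat) (by simpa only [hneg] using hc))
    simp only [map_sub, map_prod, map_pow, sub_eq_zero] at h
    have h' : ∏ k, Units.mk0 _ (hd k) ^ (c k).toNat = ∏ k, Units.mk0 _ (hd k) ^ (-c k).toNat := by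
      ext
      simpa using h
    calc ∏ k, Units.mk0 _ (hd k) ^ c k
        = ∏ k, Units.mk0 _ (hd k) ^ (((c k).toNat : ℤ) - ((-c k).toNat : ℕ)) := by
          simp only [hneg]
      _ = 1 := by
          simpa only [zpow_sub, zpow_natCast, Finset.prod_mul_distrib, Finset.prod_inv_distrib,
            mul_inv_eq_one] using h'
  have hz' : ∀ k, eval f (pderiv k G) = toricMonomial W z k := fun k => by rw [hz, Units.val_mk0]
  refine ⟨z, hz', ?_⟩
  unfold IsSingularAt
  simp only [← hz']
  exact mul_eval_pderiv_mem_relations hM hG hf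

end

end Nondefective

section Cayley

open MvPolynomial

variable {ι ν : Type*}

/-- The Cayley configuration of the exponents `ex k`, divided into blocks by `blk`: the relations
among its rows are the singular systems at the unit point of the torus, with left null vector
`(1, …, 1)`. -/
def cayley [DecidableEq ν] (blk : ι → ν) (ex : ι → ν → ℤ) : Matrix ι (ν ⊕ ν) ℤ :=
  Matrix.of fun k => Sum.elim (Pi.single (blk k) 1) (ex k)

/-- The span of the differences of exponents within the blocks in `I`. -/
def differenceSpan (blk : ι → ν) (ex : ι → ν → ℤ) (R : Type*) [CommRing R] (I : Set ν) :
    Submodule R (ν → R) :=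
  Submodule.span R {v | ∃ k k', blk k = blk k' ∧ blk k ∈ I ∧ v = fun j => (ex k j - ex k' j : R)}

/-- The hypotheses of the theorem, for supports `{ex k | blk k = i}`: each of them is nonempty, and
the tuple is reduced and irreducible. -/
structure IsReducedIrreducible (blk : ι → ν) (ex : ι → ν → ℤ) : Prop where
  surjective : Function.Surjective blk
  reduced : differenceSpan blk ex ℤ Set.univ = ⊤
  irreducible : ∀ I : Finset ν, I.Nonempty → (I : Set ν) ≠ Set.univ →
    I.card < Module.finrank ℤ (differenceSpan blk ex ℤ I)

/-- The Jacobian matrix at the unit point of the torus of the system with coefficients `c`. -/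
def unitJacobian [Fintype ι] [DecidableEq ν] (blk : ι → ν) (ex : ι → ν → ℤ) {R : Type*}
    [CommRing R] (c : ι → R) : Matrix ν ν R :=
  Matrix.of fun i j => ∑ k with blk k = i, c k * ex k j

variable {blk : ι → ν} {ex : ι → ν → ℤ} {R : Type*} [CommRing R] {𝕜 : Type*} [Field 𝕜]

theorem sub_mem_differenceSpan {I : Set ν} {k k' : ι} (h : blk k = blk k') (hI : blk k ∈ I) :
    (fun j => (ex k j - ex k' j : R)) ∈ differenceSpan blk ex R I :=
  Submodule.subset_span ⟨k, k', h, hI, rfl⟩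

theorem differenceSpan_le_biSup (J : Finset ν) :
    differenceSpan blk ex R J ≤ ⨆ i ∈ J, differenceSpan blk ex R {i} := by
  refine Submodule.span_le.mpr ?_
  rintro v ⟨k, k', hk, hJ, rfl⟩
  exact le_iSup₂ (f := fun i (_ : i ∈ J) => differenceSpan blk ex R {i}) (blk k) hJ
    (sub_mem_differenceSpan hk rfl)

theorem finrank_differenceSpan_int_le [Finite ν] [CharZero 𝕜] (I : Set ν) :
    Module.finrank ℤ (differenceSpan blk ex ℤ I) ≤
      Module.finrank 𝕜 (differenceSpan blk ex 𝕜 I) := by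
  let φ : (ν → ℤ) →ₗ[ℤ] (ν → 𝕜) := (Algebra.linearMap ℤ 𝕜).compLeft ν
  have hmap : differenceSpan blk ex ℤ I ≤
      ((differenceSpan blk ex 𝕜 I).restrictScalars ℤ).comap φ := by
    refine Submodule.span_le.mpr ?_
    rintro v ⟨k, k', hk, hI, rfl⟩
    have h : φ (fun j => ((ex k j : ℤ) - (ex k' j : ℤ) : ℤ)) =
        fun j => (ex k j - ex k' j : 𝕜) := by
      ext j
      simp [φ]
    simpa [h] using sub_mem_differenceSpan (R := 𝕜) hk hI
  let b := Module.finBasis ℤ (differenceSpan blk ex ℤ I)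
  have hb : LinearIndependent ℤ fun l => (b l : ν → ℤ) :=
    b.linearIndependent.map' (Submodule.subtype _) (Submodule.ker_subtype _)
  have hmem : ∀ l, algebraMap ℤ 𝕜 ∘ (b l : ν → ℤ) ∈ differenceSpan blk ex 𝕜 I :=
    fun l => hmap (b l).2
  have hb𝕜 : LinearIndependent 𝕜 fun l => algebraMap ℤ 𝕜 ∘ (b l : ν → ℤ) :=
    linearIndependent_algebraMap_comp_iff.mpr hb
  have hbI : LinearIndependent 𝕜
      fun l => (⟨algebraMap ℤ 𝕜 ∘ (b l : ν → ℤ), hmem l⟩ : differenceSpan blk ex 𝕜 I) :=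
    LinearIndependent.of_comp (Submodule.subtype _) hb𝕜
  simpa using hbI.fintype_card_le_finrank

theorem IsReducedIrreducible.card_lt_finrank [Finite ν] [CharZero 𝕜]
    (h : IsReducedIrreducible blk ex) {I : Finset ν} (hI : I.Nonempty)
    (hI' : (I : Set ν) ≠ Set.univ) :
    I.card < Module.finrank 𝕜 (differenceSpan blk ex 𝕜 I) :=
  (h.irreducible I hI hI').trans_le (finrank_differenceSpan_int_le _)

theorem IsReducedIrreducible.exists_mul_cayley_eq_one [Fintype ι] [Finite ν] [DecidableEq ν]
    (h : IsReducedIrreducible blk ex) : ∃ M : Matrix (ν ⊕ ν) ι ℤ, M * cayley blk ex = 1 := by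
  classical
  refine Matrix.vecMul_surjective_iff_exists_left_inverse.mp ?_
  set L := LinearMap.range (cayley blk ex).vecMulLinear
  have hrow : ∀ k, cayley blk ex k ∈ L := fun k =>
    ⟨Pi.single k 1, Matrix.single_one_vecMul k _⟩
  let φ : (ν → ℤ) →ₗ[ℤ] (ν ⊕ ν → ℤ) :=
    (LinearEquiv.sumArrowLequivProdArrow ν ν ℤ ℤ).symm.toLinearMap ∘ₗ LinearMap.inr ℤ _ _
  have hφ : L.comap φ = ⊤ := by
    rw [eq_top_iff, ← h.reduced]
    refine Submodule.span_le.mpr ?_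
    rintro v ⟨k, k', hk, -, rfl⟩
    have hsub : φ (fun j => ((ex k j : ℤ) - (ex k' j : ℤ) : ℤ)) =
        cayley blk ex k - cayley blk ex k' := by
      ext (i | j) <;> simp [φ, cayley, hk]
    simpa [hsub] using L.sub_mem (hrow k) (hrow k')
  have hinr : ∀ j, Pi.single (Sum.inr j) 1 ∈ L := fun j => by
    have hj : Pi.single j 1 ∈ L.comap φ := hφ ▸ Submodule.mem_top
    have : φ (Pi.single j 1) = Pi.single (Sum.inr j) 1 := by
      ext (i | i) <;> simp [φ, Pi.single_apply]
    simpa [this] using hj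
  have hinl : ∀ i, Pi.single (Sum.inl i) 1 ∈ L := fun i => by
    obtain ⟨k, rfl⟩ := h.surjective i
    have hk : ex k ∈ L.comap φ := hφ ▸ Submodule.mem_top
    have hsub : cayley blk ex k - φ (ex k) = Pi.single (Sum.inl (blk k)) 1 := by
      ext (i | i) <;> simp [φ, cayley, Pi.single_apply]
    simpa only [hsub] using L.sub_mem (hrow k) hk
  have htop : L = ⊤ := (Submodule.eq_top_iff_forall_basis_mem (Pi.basisFun ℤ (ν ⊕ ν))).mpr
    fun t => by simpa using Sum.rec hinl hinr t
  exact LinearMap.range_eq_top.mp htop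

section

variable [DecidableEq ν]

theorem cayley_mulVec_elim_one_zero [Fintype ν] :
    cayley blk ex *ᵥ Sum.elim 1 0 = 1 := by
  ext k
  simp [cayley, Matrix.mulVec, dotProduct]

variable [Fintype ι]

theorem sum_mul_unitJacobian [Fintype ν] (l : ν → R) (c : ι → R) (j : ν) :
    (l ᵥ* unitJacobian blk ex c) j = ∑ k, l (blk k) * c k * ex k j := by
  simp only [Matrix.vecMul, dotProduct, unitJacobian, Matrix.of_apply, Finset.mul_sum]
  rw [← Finset.sum_fiberwise Finset.univ blk]
  refine Finset.sum_congr rfl fun i _ => Finset.sum_congr rfl fun k hk => ?_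
  rw [(Finset.mem_filter.mp hk).2, mul_assoc]

theorem mem_relations_cayley [Finite ν] {c : ι → R} :
    c ∈ relations (cayley blk ex) R ↔
      (∀ i, ∑ k with blk k = i, c k = 0) ∧ ∀ j, ∑ k, c k * ex k j = 0 := by
  have := Fintype.ofFinite ν
  simp [mem_relations, cayley, Finset.sum_filter, Pi.single_apply, eq_comm]

theorem unitJacobian_add (c d : ι → R) :
    unitJacobian blk ex (c + d) = unitJacobian blk ex c + unitJacobian blk ex d := by
  ext i j
  simp [unitJacobian, add_mul, Finset.sum_add_distrib]

theorem unitJacobian_smul (a : R) (c : ι → R) :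
    unitJacobian blk ex (a • c) = a • unitJacobian blk ex c := by
  ext i j
  simp [unitJacobian, Finset.mul_sum, mul_assoc]

theorem map_unitJacobian {S : Type*} [CommRing S] (φ : R →+* S) (c : ι → R) :
    (unitJacobian blk ex c).map φ = unitJacobian blk ex fun k => φ (c k) := by
  ext i j
  simp [unitJacobian]

theorem diagonal_mul_unitJacobian [Fintype ν] (l : ν → R) (c : ι → R) :
    Matrix.diagonal l * unitJacobian blk ex c = unitJacobian blk ex fun k => l (blk k) * c k := by
  ext i j
  rw [Matrix.diagonal_mul]
  simp only [unitJacobian, Matrix.of_apply, Finset.mul_sum]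
  refine Finset.sum_congr rfl fun k hk => ?_
  rw [(Finset.mem_filter.mp hk).2, mul_assoc]

end

end Cayley

section SingularPair

open MvPolynomial

variable {𝕜 : Type*} [Field 𝕜]

theorem exists_ne_zero_eval_add_smul_ne_zero [Infinite 𝕜] {σ : Type*} (G : MvPolynomial σ 𝕜)
    {x : σ → 𝕜} (hx : eval x G ≠ 0) (d : σ → 𝕜) : ∃ ε : 𝕜, ε ≠ 0 ∧ eval (x + ε • d) G ≠ 0 := by
  let p : Polynomial 𝕜 := aeval (fun s => Polynomial.C (x s) + Polynomial.X * Polynomial.C (d s)) G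
  have hp : ∀ ε, p.eval ε = eval (x + ε • d) G := fun ε => by
    rw [← Polynomial.coe_evalRingHom, map_aeval]
    exact eval₂Hom_congr (by ext; simp) (by ext; simp [mul_comm (d _)]) rfl
  have hp₀ : p * Polynomial.X ≠ 0 := mul_ne_zero
    (fun h => hx (by simpa [h] using (hp 0).symm)) Polynomial.X_ne_zero
  obtain ⟨ε, hε⟩ : ∃ ε, (p * Polynomial.X).eval ε ≠ 0 := by
    by_contra! h
    exact hp₀ (Polynomial.funext (by simpa using h))
  rw [Polynomial.eval_mul, Polynomial.eval_X, hp] at hε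
  exact ⟨ε, right_ne_zero_of_mul hε, left_ne_zero_of_mul hε⟩

variable {ι ν : Type*}

theorem exists_ne_zero_vecMul_mem [Fintype ν] (M : Matrix ν ν 𝕜) (I : Finset ν)
    (L : Submodule 𝕜 (ν → 𝕜)) (h : I.card < Module.finrank 𝕜 L) :
    ∃ μ : ν → 𝕜, μ ≠ 0 ∧ (∀ i ∈ I, μ i = 0) ∧ μ ᵥ* M ∈ L := by
  let φ : (ν → 𝕜) →ₗ[𝕜] (I → 𝕜) × ((ν → 𝕜) ⧸ L) :=
    (LinearMap.funLeft 𝕜 𝕜 Subtype.val).prod (L.mkQ ∘ₗ M.vecMulLinear)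
  have hlt : Module.finrank 𝕜 ((I → 𝕜) × ((ν → 𝕜) ⧸ L)) < Module.finrank 𝕜 (ν → 𝕜) := by
    have := L.finrank_quotient_add_finrank
    rw [Module.finrank_prod, Module.finrank_fintype_fun_eq_card, Fintype.card_coe]
    omega
  obtain ⟨μ, hμ, hμ₀⟩ := (Submodule.ne_bot_iff _).mp (φ.ker_ne_bot_of_finrank_lt hlt)
  obtain ⟨hI, hL⟩ := Prod.mk_eq_zero.mp (LinearMap.mem_ker.mp hμ)
  exact ⟨μ, hμ₀, fun i hi => congrFun hI ⟨i, hi⟩, (Submodule.Quotient.mk_eq_zero L).mp hL⟩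

variable [DecidableEq ν] {blk : ι → ν} {ex : ι → ν → ℤ}

theorem IsReducedIrreducible.radoCondition [Finite ν] [CharZero 𝕜]
    (h : IsReducedIrreducible blk ex) (i₀ : ν) {v₀ : ν → 𝕜} (hv₀ : v₀ ≠ 0) :
    RadoCondition (Function.update (fun i => differenceSpan blk ex 𝕜 {i}) i₀ (𝕜 ∙ v₀)) := by
  set L := Function.update (fun i => differenceSpan blk ex 𝕜 {i}) i₀ (𝕜 ∙ v₀)
  have := Fintype.ofFinite ν
  intro J
  have hle : differenceSpan blk ex 𝕜 (J.erase i₀ : Finset ν) ≤ ⨆ i ∈ J, L i := by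
    refine (differenceSpan_le_biSup _).trans (iSup₂_le fun i hi => ?_)
    obtain ⟨hne, hiJ⟩ := Finset.mem_erase.mp hi
    exact le_iSup₂_of_le i hiJ (by simp [L, hne])
  obtain hJ | hJ := (J.erase i₀).eq_empty_or_nonempty
  · obtain rfl | rfl := Finset.erase_eq_empty_iff J i₀ |>.mp hJ
    · simp
    · simp [L, hv₀]
  · have hne : (J.erase i₀ : Set ν) ≠ Set.univ := fun huniv =>
      Finset.notMem_erase i₀ J (Finset.coe_eq_univ.mp huniv ▸ Finset.mem_univ i₀)
    have hlt := (h.card_lt_finrank (𝕜 := 𝕜) hJ hne).trans_le (Submodule.finrank_mono hle)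
    have := J.pred_card_le_card_erase (a := i₀)
    omega

theorem IsReducedIrreducible.exists_det_updateRow_ne_zero [Fintype ν] [CharZero 𝕜]
    (h : IsReducedIrreducible blk ex) (i₀ : ν) {v₀ : ν → 𝕜} (hv₀ : v₀ ≠ 0) :
    ∃ w : Matrix ν ν 𝕜, (∀ i ≠ i₀, w i ∈ differenceSpan blk ex 𝕜 {i}) ∧
      (w.updateRow i₀ v₀).det ≠ 0 := by
  obtain ⟨w, hw, hindep⟩ := (h.radoCondition i₀ hv₀).exists_linearIndependent
  change Matrix ν ν 𝕜 at w
  refine ⟨w, fun i hi => by simpa [hi] using hw i, fun hdet => ?_⟩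
  obtain ⟨t, ht⟩ := Submodule.mem_span_singleton.mp (by simpa using hw i₀)
  have hw_eq : w = w.updateRow i₀ (t • v₀) := ht ▸ (Matrix.updateRow_eq_self w i₀).symm
  have hunit := (Matrix.isUnit_iff_isUnit_det _).mp
    (Matrix.linearIndependent_rows_iff_isUnit.mp hindep : IsUnit w)
  rw [hw_eq, Matrix.det_updateRow_smul, hdet, mul_zero] at hunit
  exact not_isUnit_zero hunit

variable [Fintype ι]

theorem exists_one_vecMul_unitJacobian_eq [Fintype ν] {I : Set ν} {w : ν → 𝕜}
    (hw : w ∈ differenceSpan blk ex 𝕜 I) :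
    ∃ c : ι → 𝕜, (∀ k, blk k ∉ I → c k = 0) ∧ (∀ i, ∑ k with blk k = i, c k = 0) ∧
      1 ᵥ* unitJacobian blk ex c = w := by
  classical
  induction hw using Submodule.span_induction with
  | mem w hw =>
    obtain ⟨k, k', hk, hI, rfl⟩ := hw
    refine ⟨Pi.single k 1 - Pi.single k' 1, fun m hm => ?_, fun i => ?_, ?_⟩
    · have h₁ : m ≠ k := fun h => hm (h ▸ hI)
      have h₂ : m ≠ k' := fun h => hm (h ▸ hk ▸ hI)
      simp [h₁, h₂]
    · simp [hk]
    · ext j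
      simp [sum_mul_unitJacobian, sub_mul, Finset.sum_sub_distrib, Pi.single_apply]
  | zero => exact ⟨0, by simp, by simp, by ext; simp [sum_mul_unitJacobian]⟩
  | add u v _ _ hu hv =>
    obtain ⟨c, hcI, hc, rfl⟩ := hu
    obtain ⟨d, hdI, hd, rfl⟩ := hv
    refine ⟨c + d, fun k hk => by simp [hcI k hk, hdI k hk],
      fun i => by simp [Finset.sum_add_distrib, hc, hd], ?_⟩
    rw [unitJacobian_add, Matrix.vecMul_add]
  | smul a u _ hu =>
    obtain ⟨c, hcI, hc, rfl⟩ := hu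
    refine ⟨a • c, fun k hk => by simp [hcI k hk], fun i => by simp [← Finset.mul_sum, hc], ?_⟩
    rw [unitJacobian_smul, Matrix.vecMul_smul]

theorem exists_vecMul_unitJacobian_eq [Fintype ν] {I : Set ν} {l : ν → 𝕜} (hl : ∀ i ∈ I, l i ≠ 0)
    {w : ν → 𝕜} (hw : w ∈ differenceSpan blk ex 𝕜 I) :
    ∃ c : ι → 𝕜, (∀ k, blk k ∉ I → c k = 0) ∧ (∀ i, ∑ k with blk k = i, c k = 0) ∧
      l ᵥ* unitJacobian blk ex c = w := by
  obtain ⟨c, hcI, hc, rfl⟩ := exists_one_vecMul_unitJacobian_eq hw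
  refine ⟨fun k => (l (blk k))⁻¹ * c k, fun k hk => by simp [hcI k hk], fun i => ?_, ?_⟩
  · rw [← mul_zero (l i)⁻¹, ← hc i, Finset.mul_sum]
    exact Finset.sum_congr rfl fun k hk => by simp only [(Finset.mem_filter.mp hk).2]
  · ext j
    simp only [sum_mul_unitJacobian, Pi.one_apply, one_mul]
    refine Finset.sum_congr rfl fun k _ => ?_
    by_cases hk : blk k ∈ I
    · rw [mul_inv_cancel_left₀ (hl _ hk)]
    · simp [hcI k hk]

theorem exists_unitJacobian_eq [Finite ν] (w : Matrix ν ν 𝕜)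
    (hw : ∀ i, w i ∈ differenceSpan blk ex 𝕜 {i}) :
    ∃ c : ι → 𝕜, (∀ i, ∑ k with blk k = i, c k = 0) ∧ unitJacobian blk ex c = w := by
  have := Fintype.ofFinite ν
  choose c hcI hc hcw using fun i => exists_one_vecMul_unitJacobian_eq (hw i)
  refine ⟨fun k => c (blk k) k, fun i => ?_, ?_⟩
  · rw [← hc i i]
    exact Finset.sum_congr rfl fun k hk => by simp only [(Finset.mem_filter.mp hk).2]
  · ext i j
    rw [← hcw i, sum_mul_unitJacobian]
    simp only [unitJacobian, Matrix.of_apply, Finset.sum_filter, Pi.one_apply, one_mul]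
    refine Finset.sum_congr rfl fun k _ => ?_
    by_cases hk : blk k = i
    · simp [hk]
    · simp [hk, hcI i k hk]

variable [Fintype ν]

/-- The system with coefficients `c` is singular at the unit point of the torus, and `l` is a left
null vector of its Jacobian matrix there. -/
structure IsSingularPair (blk : ι → ν) (ex : ι → ν → ℤ) (c : ι → 𝕜) (l : ν → 𝕜) : Prop where
  sum_block : ∀ i, ∑ k with blk k = i, c k = 0
  ne_zero : l ≠ 0
  vecMul_eq_zero : l ᵥ* unitJacobian blk ex c = 0

theorem IsSingularPair.mul_mem_relations {c : ι → 𝕜} {l : ν → 𝕜} (h : IsSingularPair blk ex c l) :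
    (fun k => l (blk k) * c k) ∈ relations (cayley blk ex) 𝕜 := by
  refine mem_relations_cayley.mpr ⟨fun i => ?_, fun j => ?_⟩
  · rw [← mul_zero (l i), ← h.sum_block i, Finset.mul_sum]
    exact Finset.sum_congr rfl fun k hk => by simp only [(Finset.mem_filter.mp hk).2]
  · rw [← sum_mul_unitJacobian, h.vecMul_eq_zero, Pi.zero_apply]

theorem IsSingularPair.add_smul {c d : ι → 𝕜} {l μ : ν → 𝕜} (h : IsSingularPair blk ex c l)
    (hdl : ∀ k, l (blk k) = 0 → d k = 0) (hd : ∀ i, ∑ k with blk k = i, d k = 0)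
    (hμl : ∀ i, l i ≠ 0 → μ i = 0)
    (hdμ : l ᵥ* unitJacobian blk ex d = -(μ ᵥ* unitJacobian blk ex c)) (ε : 𝕜) :
    IsSingularPair blk ex (c + ε • d) (l + ε • μ) where
  sum_block i := by simp [Finset.sum_add_distrib, ← Finset.mul_sum, h.sum_block, hd]
  ne_zero h₀ := h.ne_zero <| by
    ext i
    by_contra hi
    exact hi (by simpa [hμl i hi] using congrFun h₀ i)
  vecMul_eq_zero := by
    have hμd : μ ᵥ* unitJacobian blk ex d = 0 := by
      ext j
      rw [sum_mul_unitJacobian]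
      refine Finset.sum_eq_zero fun k _ => ?_
      by_cases hk : l (blk k) = 0
      · simp [hdl k hk]
      · simp [hμl _ hk]
    rw [unitJacobian_add, unitJacobian_smul, Matrix.vecMul_add, Matrix.add_vecMul,
      Matrix.add_vecMul, Matrix.vecMul_smul, Matrix.vecMul_smul, Matrix.smul_vecMul,
      Matrix.smul_vecMul, h.vecMul_eq_zero, hdμ, hμd]
    simp

variable [CharZero 𝕜]

/-- Where `l` vanishes, irreducibility leaves room for a first-order deformation of `l`, which can
be compensated on the remaining blocks. -/
theorem IsSingularPair.exists_zeros_ssubset (h : IsReducedIrreducible blk ex)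
    (G : MvPolynomial (ι ⊕ ν) 𝕜) {c : ι → 𝕜} {l : ν → 𝕜} (hcl : IsSingularPair blk ex c l)
    (hG : eval (Sum.elim c l) G ≠ 0) (hl : ∃ i, l i = 0) :
    ∃ c' l', IsSingularPair blk ex c' l' ∧ eval (Sum.elim c' l') G ≠ 0 ∧
      {i | l' i = 0} ⊂ {i | l i = 0} := by
  classical
  set I : Finset ν := Finset.univ.filter fun i => l i ≠ 0
  have hmem : ∀ i, i ∈ I ↔ l i ≠ 0 := fun i => by simp [I]
  have hIne : I.Nonempty := (Function.ne_iff.mp hcl.ne_zero).imp fun i hi => (hmem i).mpr hi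
  have hIuniv : (I : Set ν) ≠ Set.univ := fun hI => by
    obtain ⟨i, hi⟩ := hl
    exact (hmem i).mp (Finset.coe_eq_univ.mp hI ▸ Finset.mem_univ i) hi
  obtain ⟨μ, hμ, hμI, hμc⟩ := exists_ne_zero_vecMul_mem (unitJacobian blk ex c) I _
    (h.card_lt_finrank hIne hIuniv)
  obtain ⟨d, hdI, hd, hdμ⟩ := exists_vecMul_unitJacobian_eq (fun i hi => (hmem i).mp hi)
    (Submodule.neg_mem _ hμc)
  obtain ⟨ε, hε, hGε⟩ := exists_ne_zero_eval_add_smul_ne_zero G hG (Sum.elim d μ)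
  have hsum : Sum.elim c l + ε • Sum.elim d μ = Sum.elim (c + ε • d) (l + ε • μ) := by
    ext (k | i) <;> simp
  have hμl : ∀ i, l i ≠ 0 → μ i = 0 := fun i hi => hμI i ((hmem i).mpr hi)
  refine ⟨c + ε • d, l + ε • μ, hcl.add_smul
    (fun k hk => hdI k fun hkI => (hmem _).mp hkI hk) hd hμl hdμ ε, hsum ▸ hGε, ?_⟩
  obtain ⟨i, hi⟩ := Function.ne_iff.mp hμ
  refine Set.ssubset_iff_of_subset (fun j hj => ?_) |>.mpr
    ⟨i, of_not_not fun hil => hi (hμl i hil), by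
      simpa [of_not_not fun hil => hi (hμl i hil), hε] using hi⟩
  by_contra hlj
  exact hlj (by simpa [hμl j hlj] using hj)

theorem IsSingularPair.exists_forall_ne_zero (h : IsReducedIrreducible blk ex)
    (G : MvPolynomial (ι ⊕ ν) 𝕜) {c : ι → 𝕜} {l : ν → 𝕜} (hcl : IsSingularPair blk ex c l)
    (hG : eval (Sum.elim c l) G ≠ 0) :
    ∃ c' l', IsSingularPair blk ex c' l' ∧ eval (Sum.elim c' l') G ≠ 0 ∧ ∀ i, l' i ≠ 0 := by
  induction hZ : {i | l i = 0} using WellFoundedLT.induction generalizing c l with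
  | _ Z ih =>
  by_cases hl : ∃ i, l i = 0
  · obtain ⟨c', l', hcl', hG', hlt⟩ := hcl.exists_zeros_ssubset h G hG hl
    exact ih _ (hZ ▸ hlt) hcl' hG' rfl
  · exact ⟨c, l, hcl, hG, not_exists.mp hl⟩

section Determinant

variable (i₀ : ν) {v₀ : ν → 𝕜}

theorem IsReducedIrreducible.exists_mem_relations_det_ne_zero (h : IsReducedIrreducible blk ex)
    (hv₀ : v₀ ≠ 0) :
    ∃ c ∈ relations (cayley blk ex) 𝕜, ((unitJacobian blk ex c).updateRow i₀ v₀).det ≠ 0 := by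
  obtain ⟨w, hw, hdet⟩ := h.exists_det_updateRow_ne_zero i₀ hv₀
  obtain ⟨c, hc, hcw⟩ := exists_unitJacobian_eq (blk := blk) (ex := ex) (w.updateRow i₀ 0)
    fun i => by
      by_cases hi : i = i₀
      · simp [hi]
      · rw [Matrix.updateRow_ne hi]
        exact hw i hi
  have hcl : IsSingularPair blk ex c (Pi.single i₀ 1) :=
    ⟨hc, by simp, by simp [hcw, Matrix.row]⟩
  let G : MvPolynomial (ι ⊕ ν) 𝕜 :=
    ((unitJacobian blk ex fun k => X (Sum.inl k)).updateRow i₀ fun j => C (v₀ j)).det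
  have hG : ∀ c l, eval (Sum.elim c l) G = ((unitJacobian blk ex c).updateRow i₀ v₀).det :=
    fun c l => by
      rw [RingHom.map_det, RingHom.mapMatrix_apply, Matrix.map_updateRow, map_unitJacobian]
      simp [Function.comp_def]
  obtain ⟨c', l, hcl', hGc', hl⟩ := hcl.exists_forall_ne_zero h G (by simpa [hG, hcw] using hdet)
  refine ⟨_, hcl'.mul_mem_relations, ?_⟩
  have hdiag : (unitJacobian blk ex fun k => l (blk k) * c' k).updateRow i₀ v₀ =
      Matrix.diagonal (Function.update l i₀ 1) * (unitJacobian blk ex c').updateRow i₀ v₀ := by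
    rw [← diagonal_mul_unitJacobian]
    ext i j
    obtain rfl | hi := eq_or_ne i i₀ <;> simp [Matrix.diagonal_mul, *]
  rw [hdiag, Matrix.det_mul, Matrix.det_diagonal]
  refine mul_ne_zero (Finset.prod_ne_zero_iff.mpr fun i _ => ?_) (hG c' l ▸ hGc')
  obtain rfl | hi := eq_or_ne i i₀ <;> simp [*]

theorem IsReducedIrreducible.det_genericRelation_ne_zero (h : IsReducedIrreducible blk ex)
    (hv₀ : v₀ ≠ 0) :
    ((unitJacobian blk ex (genericRelation (cayley blk ex) 𝕜)).updateRow i₀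
      fun j => C (v₀ j)).det ≠ 0 := by
  obtain ⟨c, hc, hdet⟩ := h.exists_mem_relations_det_ne_zero i₀ hv₀
  refine fun h₀ => hdet ?_
  have := congrArg (eval (paramPoint 0 ⟨c, hc⟩)) h₀
  rw [RingHom.map_det, RingHom.mapMatrix_apply, Matrix.map_updateRow, map_unitJacobian] at this
  simpa [Function.comp_def, eval_genericRelation] using this

end Determinant

end SingularPair

section EssentialLinearity

variable {ι ν P : Type*} {blk : ι → ν} {ex : ι → ν → ℤ} {cl : ι → P}

/-- Some automorphism of the lattice sends, up to translations, all the supports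
`{ex k | blk k = i}` into the set of vertices of the standard simplex. -/
def IsEssentiallyLinear [DecidableEq ν] (blk : ι → ν) (ex : ι → ν → ℤ) : Prop :=
  ∃ (φ : (ν → ℤ) ≃+ (ν → ℤ)) (v : ν → ν → ℤ),
    ∀ k, φ (ex k) + v (blk k) ∈ insert 0 (Set.range fun j => (Pi.single j 1 : ν → ℤ))

/-- An injective linear map that sends the exponents of each block, up to a translation, to
vertices of the standard simplex, the exponent `ex k` to the vertex numbered `cl k`. -/
structure IsSimplexMap [DecidableEq P] (blk : ι → ν) (ex : ι → ν → ℤ) (cl : ι → P)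
    (Φ : (ν → ℤ) →ₗ[ℤ] (P → ℤ)) : Prop where
  injective : Function.Injective Φ
  map_sub_eq : ∀ {k k'}, blk k = blk k' →
    Φ (ex k - ex k') = Pi.single (cl k) 1 - Pi.single (cl k') 1

theorem differenceSpan_int_le_iff {I : Set ν} {L : Submodule ℤ (ν → ℤ)} :
    differenceSpan blk ex ℤ I ≤ L ↔ ∀ k k', blk k = blk k' → blk k ∈ I → ex k - ex k' ∈ L := by
  refine Submodule.span_le.trans ⟨fun h k k' hk hI => h ⟨k, k', hk, hI, rfl⟩, fun h v => ?_⟩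
  rintro ⟨k, k', hk, hI, rfl⟩
  exact h k k' hk hI

namespace IsReducedIrreducible

theorem eq_top_of_forall_sub_mem (h : IsReducedIrreducible blk ex) {L : Submodule ℤ (ν → ℤ)}
    (hL : ∀ k k', blk k = blk k' → ex k - ex k' ∈ L) : L = ⊤ :=
  top_le_iff.mp (h.reduced ▸ differenceSpan_int_le_iff.mpr fun k k' hk _ => hL k k' hk)

theorem exists_eq_intCast_of_affine [Fintype ν] {𝕜 : Type*} [Field 𝕜]
    (h : IsReducedIrreducible blk ex) {a : ι → ℤ} {ζ p : ν → 𝕜}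
    (ha : ∀ k, (a k : 𝕜) = ζ (blk k) + ∑ j, ex k j * p j) (j : ν) : ∃ m : ℤ, (m : 𝕜) = p j := by
  classical
  have htop := h.eq_top_of_forall_sub_mem
    (L := (LinearMap.range (Algebra.linearMap ℤ 𝕜)).comap (Fintype.linearCombination ℤ p))
    fun k k' hk => ⟨a k - a k', by
      simp [Fintype.linearCombination_apply, ha, hk, sub_mul, Finset.sum_sub_distrib]⟩
  obtain ⟨m, hm⟩ := htop.ge (Submodule.mem_top (x := Pi.single j 1))
  exact ⟨m, by simpa using hm⟩

theorem exists_isSimplexMap [Fintype ν] [DecidableEq P] {𝕜 : Type*} [Field 𝕜] [CharZero 𝕜]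
    (h : IsReducedIrreducible blk ex) {ζ π : P → ν → 𝕜}
    (hπ : ∀ α k, (if cl k = α then 1 else 0) = ζ α (blk k) + ∑ j, ex k j * π α j)
    (hsep : ∀ u : ν → 𝕜, (∀ α, ∑ j, u j * π α j = 0) → u = 0) :
    ∃ Φ, IsSimplexMap blk ex cl Φ := by
  choose M hM using fun α => h.exists_eq_intCast_of_affine (ζ := ζ α) (p := π α)
    (a := fun k => if cl k = α then 1 else 0) fun k => by rw [← hπ α k]; push_cast; rfl
  have hcast (z : ν → ℤ) (α : P) :
      ((Matrix.mulVecLin (Matrix.of M) z α : ℤ) : 𝕜) = ∑ j, z j * π α j := by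
    simp [Matrix.mulVec, dotProduct, hM, mul_comm]
  refine ⟨Matrix.mulVecLin (Matrix.of M), (injective_iff_map_eq_zero _).mpr fun z hz => ?_,
    fun {k k'} hk => funext fun α => Int.cast_injective (α := 𝕜) ?_⟩
  · have hz' := hsep (fun j => z j) fun α => by rw [← hcast, hz, Pi.zero_apply, Int.cast_zero]
    exact funext fun j => Int.cast_eq_zero.mp (congrFun hz' j)
  · have hα (k : ι) : ((Pi.single (cl k) 1 : P → ℤ) α : 𝕜) = ζ α (blk k) + ∑ j, ex k j * π α j := by
      rw [← hπ α k, Pi.single_apply]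
      simp [eq_comm]
    rw [hcast, Pi.sub_apply, Int.cast_sub, hα, hα, hk, add_sub_add_left_eq_sub]
    simp [sub_mul, Finset.sum_sub_distrib]

end IsReducedIrreducible

namespace IsSimplexMap

variable [DecidableEq P] {Φ : (ν → ℤ) →ₗ[ℤ] (P → ℤ)}

theorem sum_eq_zero [Fintype P] (hΦ : IsSimplexMap blk ex cl Φ) (h : IsReducedIrreducible blk ex)
    (z : ν → ℤ) : ∑ α, Φ z α = 0 := by
  have htop := h.eq_top_of_forall_sub_mem
    (L := LinearMap.ker (Fintype.linearCombination ℤ (fun _ : P => (1 : ℤ)) ∘ₗ Φ))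
    fun k k' hk => by simp [hΦ.map_sub_eq hk]
  simpa [Fintype.linearCombination_apply] using htop.ge (Submodule.mem_top (x := z))

theorem finrank_differenceSpan_add_le [Fintype ν] (hΦ : IsSimplexMap blk ex cl Φ) {C : Set P}
    {I : Set ν} (hI : ∀ k, blk k ∈ I ↔ cl k ∈ C) :
    Module.finrank ℤ (differenceSpan blk ex ℤ I) +
      Module.finrank ℤ (differenceSpan blk ex ℤ Iᶜ) ≤ Fintype.card ν := by
  let L (D : Set P) : Submodule ℤ (ν → ℤ) :=
    (Submodule.pi Dᶜ fun _ => (⊥ : Submodule ℤ ℤ)).comap Φ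
  have hL (D : Set P) (J : Set ν) (hJ : ∀ k, blk k ∈ J ↔ cl k ∈ D) :
      differenceSpan blk ex ℤ J ≤ L D := by
    refine differenceSpan_int_le_iff.mpr fun k k' hk hkJ α hα => ?_
    have hne (k : ι) (hk : blk k ∈ J) : α ≠ cl k := fun e => hα (e ▸ (hJ k).mp hk)
    simp [hΦ.map_sub_eq hk, hne k hkJ, hne k' (hk ▸ hkJ)]
  have hdisj : Disjoint (L C) (L Cᶜ) := by
    refine Submodule.disjoint_def.mpr fun z hz hz' => hΦ.injective ?_
    rw [map_zero]
    ext α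
    by_cases hα : α ∈ C
    · exact hz' α (by simpa using hα)
    · exact hz α hα
  have hdisj' := hdisj.mono (hL C I hI) (hL Cᶜ Iᶜ fun k => (hI k).not)
  have hrank := Submodule.rank_sup_add_rank_inf_eq (differenceSpan blk ex ℤ I)
    (differenceSpan blk ex ℤ Iᶜ)
  rw [hdisj'.eq_bot, rank_bot, add_zero] at hrank
  simp only [← Module.finrank_eq_rank] at hrank
  rw [← Module.finrank_fintype_fun_eq_card (η := ν) ℤ, ← Nat.cast_inj (R := Cardinal).mp
    (hrank.trans (Nat.cast_add _ _).symm)]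
  exact Submodule.finrank_le _

theorem exists_map_eq_single_sub_single [Finite ν] (hΦ : IsSimplexMap blk ex cl Φ)
    (h : IsReducedIrreducible blk ex) (k₀ k₁ : ι) :
    ∃ z, Φ z = Pi.single (cl k₁) 1 - Pi.single (cl k₀) 1 := by
  classical
  have := Fintype.ofFinite ν
  let C : Set P := {α | ∃ z, Φ z = Pi.single α 1 - Pi.single (cl k₀) 1}
  have hC : ∀ k k', blk k = blk k' → cl k ∈ C → cl k' ∈ C := by
    rintro k k' hk ⟨z, hz⟩
    refine ⟨z + (ex k' - ex k), ?_⟩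
    rw [map_add, hz, hΦ.map_sub_eq hk.symm]
    abel
  by_contra hk₁
  let I : Finset ν := {i | ∃ k, blk k = i ∧ cl k ∈ C}
  have hI (k : ι) : blk k ∈ I ↔ cl k ∈ C := by
    simpa [I] using ⟨fun ⟨k', hk', hkC⟩ => hC k' k hk' hkC, fun hkC => ⟨k, rfl, hkC⟩⟩
  have hk₀I : blk k₀ ∈ I := (hI k₀).mpr ⟨0, by simp⟩
  have hk₁I : blk k₁ ∉ I := fun hk => hk₁ ((hI k₁).mp hk)
  have hrank := h.irreducible I ⟨_, hk₀I⟩ fun e => hk₁I (Finset.mem_coe.mp (e ▸ Set.mem_univ _))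
  have hrank' := h.irreducible Iᶜ ⟨_, Finset.mem_compl.mpr hk₁I⟩ fun e =>
    Finset.mem_compl.mp (Finset.mem_coe.mp (e ▸ Set.mem_univ (blk k₀))) hk₀I
  have hle := hΦ.finrank_differenceSpan_add_le (I := (I : Set ν)) hI
  rw [Finset.coe_compl] at hrank'
  have hcard := Finset.card_add_card_compl I
  omega

theorem exists_linearEquiv [Finite ν] [Finite P] (hΦ : IsSimplexMap blk ex cl Φ)
    (h : IsReducedIrreducible blk ex) (hcl : Function.Surjective cl) (α₀ : P) :
    ∃ e : (ν → ℤ) ≃ₗ[ℤ] ({α : P // α ≠ α₀} → ℤ), ∀ z α, e z α = Φ z α := by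
  have := Fintype.ofFinite ν
  have := Fintype.ofFinite P
  let Ψ : (ν → ℤ) →ₗ[ℤ] ({α : P // α ≠ α₀} → ℤ) := LinearMap.funLeft ℤ ℤ Subtype.val ∘ₗ Φ
  have hinj : Function.Injective Ψ := by
    refine (injective_iff_map_eq_zero _).mpr fun z hz => hΦ.injective ?_
    have hz' (α : P) (hα : α ≠ α₀) : Φ z α = 0 := congrFun hz ⟨α, hα⟩
    rw [map_zero]
    ext α
    rcases eq_or_ne α α₀ with rfl | hα
    · rw [← Fintype.sum_eq_single α hz', hΦ.sum_eq_zero h, Pi.zero_apply]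
    · exact hz' α hα
  have hsurj : Function.Surjective Ψ := by
    rw [← LinearMap.range_eq_top, ← top_le_iff, ← (Pi.basisFun ℤ _).span_eq, Submodule.span_le]
    rintro _ ⟨⟨α, hα⟩, rfl⟩
    obtain ⟨k₀, rfl⟩ := hcl α₀
    obtain ⟨k, rfl⟩ := hcl α
    obtain ⟨z, hz⟩ := hΦ.exists_map_eq_single_sub_single h k₀ k
    refine ⟨z, funext fun β => ?_⟩
    simp [Ψ, LinearMap.funLeft_apply, hz, Pi.single_apply, β.2, Subtype.ext_iff]
  exact ⟨LinearEquiv.ofBijective Ψ ⟨hinj, hsurj⟩, fun _ _ => rfl⟩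

theorem isEssentiallyLinear [Finite ν] [DecidableEq ν] [Finite P] [Nonempty ι]
    (hΦ : IsSimplexMap blk ex cl Φ) (h : IsReducedIrreducible blk ex)
    (hcl : Function.Surjective cl) : IsEssentiallyLinear blk ex := by
  have := Fintype.ofFinite ν
  have := Fintype.ofFinite P
  obtain ⟨k₀⟩ := ‹Nonempty ι›
  obtain ⟨e, he⟩ := hΦ.exists_linearEquiv h hcl (cl k₀)
  have hcard : Fintype.card {α : P // α ≠ cl k₀} = Fintype.card ν := by
    simpa using e.finrank_eq.symm
  let r : {α : P // α ≠ cl k₀} ≃ ν := Fintype.equivOfCardEq hcard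
  let φ : (ν → ℤ) ≃ₗ[ℤ] (ν → ℤ) := e.trans (LinearEquiv.funCongrLeft ℤ ℤ r.symm)
  let E (α : P) (i : ν) : ℤ := if (r.symm i : P) = α then 1 else 0
  choose s hs using h.surjective
  refine ⟨φ.toAddEquiv, fun i => E (cl (s i)) - φ (ex (s i)), fun k => ?_⟩
  have hφ : φ (ex k) - φ (ex (s (blk k))) = E (cl k) - E (cl (s (blk k))) := by
    ext i
    have hi := he (ex k - ex (s (blk k))) (r.symm i)
    rw [hΦ.map_sub_eq (hs _).symm, map_sub] at hi
    simpa [φ, E, Pi.single_apply, LinearEquiv.funCongrLeft_apply, LinearMap.funLeft_apply] using hi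
  have hk : φ.toAddEquiv (ex k) + (E (cl (s (blk k))) - φ (ex (s (blk k)))) = E (cl k) := by
    change φ (ex k) + _ = _
    linear_combination (exp := 1) hφ
  rw [hk]
  rcases eq_or_ne (cl k) (cl k₀) with hk₀ | hk₀
  · exact .inl (funext fun i => if_neg (by rw [hk₀]; exact (r.symm i).2))
  · refine .inr ⟨r ⟨cl k, hk₀⟩, funext fun i => ?_⟩
    simp only [E, Pi.single_apply, ← Equiv.symm_apply_eq, Subtype.ext_iff]

end IsSimplexMap

end EssentialLinearity

section CayleyNondefective

open MvPolynomial

variable {ι ν 𝕜 R : Type*} [Fintype ν] [DecidableEq ν] [CommRing R]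
  {blk : ι → ν} {ex : ι → ν → ℤ}

theorem mem_columnSpace_cayley {h : ι → R} :
    h ∈ columnSpace (cayley blk ex) R ↔
      ∃ ζ p : ν → R, ∀ k, h k = ζ (blk k) + ∑ j, ex k j * p j := by
  rw [mem_columnSpace]
  constructor
  · rintro ⟨y, hy⟩
    exact ⟨y ∘ Sum.inl, y ∘ Sum.inr, fun k => by simp [hy, cayley, Pi.single_apply]⟩
  · rintro ⟨ζ, p, hp⟩
    exact ⟨Sum.elim ζ p, fun k => by simp [hp, cayley, Pi.single_apply]⟩

theorem one_mem_columnSpace_cayley : (1 : ι → R) ∈ columnSpace (cayley blk ex) R :=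
  mem_columnSpace_cayley.mpr ⟨1, 0, fun k => by simp⟩

/-- Write `h k = ∑ α, α * (if h k = α then 1 else 0)` and sum up affine expressions of the
indicator functions. If no vector is orthogonal to all their linear parts, the values of `h` number
the vertices of a simplex, which makes the supports essentially linear. -/
theorem IsReducedIrreducible.exists_affine_orthogonal [Finite ι] [Nonempty ι] [Field 𝕜] [CharZero 𝕜]
    [Algebra 𝕜 R] [DecidableEq R] (hA : IsReducedIrreducible blk ex)
    (hlin : ¬ IsEssentiallyLinear blk ex) {h : ι → R}
    (hind : ∀ α, (fun k => if h k = α then 1 else 0) ∈ columnSpace (cayley blk ex) 𝕜) :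
    ∃ (γ p : ν → R) (u : ν → 𝕜), u ≠ 0 ∧ ∑ j, algebraMap 𝕜 R (u j) * p j = 0 ∧
      ∀ k, h k = γ (blk k) + ∑ j, ex k j * p j := by
  have := Fintype.ofFinite ι
  choose ζ π hπ using fun α => mem_columnSpace_cayley.mp (hind α)
  let cl (k : ι) : Set.range h := ⟨h k, k, rfl⟩
  have hcl : Function.Surjective cl := fun ⟨α, k, hk⟩ => ⟨k, Subtype.ext hk⟩
  have hπ' (α : Set.range h) (k : ι) :
      (if cl k = α then 1 else 0) = ζ α (blk k) + ∑ j, ex k j * π α j := by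
    simpa [cl, Subtype.ext_iff] using hπ α k
  obtain ⟨u, hu, hu₀⟩ : ∃ u : ν → 𝕜, (∀ α : Set.range h, ∑ j, u j * π α j = 0) ∧ u ≠ 0 := by
    by_contra! hsep
    obtain ⟨Φ, hΦ⟩ := hA.exists_isSimplexMap hπ' hsep
    exact hlin (hΦ.isEssentiallyLinear hA hcl)
  refine ⟨fun i => ∑ α ∈ Finset.univ.image h, α * algebraMap 𝕜 R (ζ α i),
    fun j => ∑ α ∈ Finset.univ.image h, α * algebraMap 𝕜 R (π α j), u, hu₀, ?_, fun k => ?_⟩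
  · simp only [Finset.mul_sum]
    rw [Finset.sum_comm]
    refine Finset.sum_eq_zero fun α hα => ?_
    obtain ⟨k, -, rfl⟩ := Finset.mem_image.mp hα
    have hk := congrArg (fun x => h k * algebraMap 𝕜 R x) (hu (cl k))
    simp only [map_sum, map_mul, map_zero, mul_zero, Finset.mul_sum] at hk
    rw [← hk]
    exact Finset.sum_congr rfl fun j _ => by ring
  · calc h k = ∑ α ∈ Finset.univ.image h, α * algebraMap 𝕜 R (if h k = α then 1 else 0) := by
          simp [apply_ite (algebraMap 𝕜 R)]
      _ = _ := by
          simp only [hπ, map_add, map_sum, map_mul, map_intCast, mul_add, Finset.sum_add_distrib,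
            Finset.mul_sum]
          rw [Finset.sum_comm]
          exact congrArg _ (Finset.sum_congr rfl fun j _ => Finset.sum_congr rfl fun α _ => by ring)

variable [Fintype ι]

theorem affine_linearPart_eq_zero [IsDomain R] {g h : ι → R} {γ p u : ν → R} {i₀ : ν}
    (hg : g ∈ relations (cayley blk ex) R) (hgh : g * h ∈ relations (cayley blk ex) R)
    (hh : ∀ k, h k = γ (blk k) + ∑ j, ex k j * p j) (hup : ∑ j, u j * p j = 0)
    (hdet : ((unitJacobian blk ex g).updateRow i₀ u).det ≠ 0) : p = 0 := by
  refine Matrix.eq_zero_of_mulVec_eq_zero hdet (funext fun i => ?_)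
  rcases eq_or_ne i i₀ with rfl | hi
  · simpa [Matrix.mulVec, dotProduct] using hup
  calc (((unitJacobian blk ex g).updateRow i₀ u) *ᵥ p) i
      = ∑ k with blk k = i, g k * ∑ j, ex k j * p j := by
        simp only [Matrix.mulVec, dotProduct, Matrix.updateRow_ne hi, unitJacobian,
          Matrix.of_apply, Finset.sum_mul, Finset.mul_sum, mul_assoc]
        exact Finset.sum_comm
    _ = ∑ k with blk k = i, (g * h) k - γ i * ∑ k with blk k = i, g k := by
        rw [Finset.mul_sum, ← Finset.sum_sub_distrib]
        refine Finset.sum_congr rfl fun k hk => ?_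
        rw [Pi.mul_apply, hh, (Finset.mem_filter.mp hk).2]
        ring
    _ = (0 : ν → R) i := by
        rw [(mem_relations_cayley.mp hg).1, (mem_relations_cayley.mp hgh).1, mul_zero, sub_zero,
          Pi.zero_apply]

theorem eq_of_mul_blockwise_mem_relations [IsDomain R] {g : ι → R} {γ u : ν → R} {i₀ : ν}
    (hg : g ∈ relations (cayley blk ex) R)
    (hgγ : (fun k => g k * γ (blk k)) ∈ relations (cayley blk ex) R)
    (hdet : ((unitJacobian blk ex g).updateRow i₀ u).det ≠ 0) (i : ν) : γ i = γ i₀ := by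
  have hconst : (fun i => γ i - γ i₀) = 0 := by
    refine Matrix.eq_zero_of_vecMul_eq_zero hdet (funext fun j => ?_)
    calc ((fun i => γ i - γ i₀) ᵥ* (unitJacobian blk ex g).updateRow i₀ u) j
        = ((fun i => γ i - γ i₀) ᵥ* unitJacobian blk ex g) j := by
          refine Finset.sum_congr rfl fun i _ => ?_
          rcases eq_or_ne i i₀ with rfl | hi
          · simp
          · exact congrArg (fun row => (γ i - γ i₀) * row j) (Matrix.updateRow_ne hi)
      _ = ∑ k, g k * γ (blk k) * ex k j - γ i₀ * ∑ k, g k * ex k j := by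
          rw [sum_mul_unitJacobian, Finset.mul_sum, ← Finset.sum_sub_distrib]
          exact Finset.sum_congr rfl fun k _ => by ring
      _ = (0 : ν → R) j := by
          rw [(mem_relations_cayley.mp hg).2, (mem_relations_cayley.mp hgγ).2, mul_zero, sub_zero,
            Pi.zero_apply]
  exact sub_eq_zero.mp (congrFun hconst i)

theorem eq_of_det_updateRow_ne_zero [IsDomain R] {g h : ι → R} {γ p u : ν → R} {i₀ : ν}
    (hg : g ∈ relations (cayley blk ex) R) (hgh : g * h ∈ relations (cayley blk ex) R)
    (hh : ∀ k, h k = γ (blk k) + ∑ j, ex k j * p j) (hup : ∑ j, u j * p j = 0)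
    (hdet : ((unitJacobian blk ex g).updateRow i₀ u).det ≠ 0) (k : ι) : h k = γ i₀ := by
  have hγ : h = fun k => γ (blk k) := by
    ext k
    simp [hh, affine_linearPart_eq_zero hg hgh hh hup hdet]
  rw [hγ] at hgh ⊢
  exact eq_of_mul_blockwise_mem_relations hg hgh hdet (blk k)

theorem IsReducedIrreducible.isNondefective_cayley [Nonempty ν] [Field 𝕜] [CharZero 𝕜]
    (hA : IsReducedIrreducible blk ex) (hlin : ¬ IsEssentiallyLinear blk ex) :
    IsNondefective (cayley blk ex) 𝕜 := by
  classical
  intro G hG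
  obtain ⟨i₀⟩ := ‹Nonempty ν›
  have : Nonempty ι := ⟨(hA.surjective i₀).choose⟩
  obtain ⟨M, hM⟩ := hA.exists_mul_cayley_eq_one
  have hgrad := scaledGradient_mem_columnSpace hM hG
  have hrel := genericRelation_mul_scaledGradient_mem_relations hM hG
  obtain ⟨γ, p, u, hu, hup, hh⟩ := hA.exists_affine_orthogonal (𝕜 := 𝕜) hlin fun α =>
    isGenericRelation_genericRelation.indicator_mem_columnSpace hM one_mem_columnSpace_cayley
      hgrad hrel α
  exact ⟨γ i₀, eq_of_det_updateRow_ne_zero genericRelation_mem_relations hrel hh hup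
    (hA.det_genericRelation_ne_zero i₀ hu)⟩

end CayleyNondefective

section GenericSingularity

open MvPolynomial

theorem IsNondefective.exists_eq_mul_zpow {ι κ 𝕜 : Type*} [Fintype ι] [Fintype κ] [DecidableEq κ]
    [Nonempty ι] [Field 𝕜] {W : Matrix ι κ ℤ} {M : Matrix κ ι ℤ} {u : κ → ℤ} {f : ι → 𝕜}
    {z z' : κ → 𝕜ˣ} {G : MvPolynomial ι 𝕜} (hW : IsNondefective W 𝕜) (hM : M * W = 1)
    (hu : W *ᵥ u = 1) (hG : hornKapranov W 𝕜 G = 0)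
    (hz : ∀ k, eval f (pderiv k G) = toricMonomial W z k) (hf : IsSingularAt W z' f) :
    ∃ a : 𝕜ˣ, z = z' * fun t => a ^ u t := by
  obtain ⟨η, hη⟩ := hW.exists_eval_pderiv_eq hG hf
  have hη₀ : η ≠ 0 := by
    rintro rfl
    obtain ⟨k⟩ := ‹Nonempty ι›
    exact (toricMonomial W z k).ne_zero (by rw [← hz, hη, zero_mul])
  refine ⟨Units.mk0 η hη₀, toricMonomial_injective hM (funext fun k => Units.ext ?_)⟩
  rw [toricMonomial_mul, toricMonomial_zpow, hu, Pi.one_apply, zpow_one, Units.val_mul,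
    Units.val_mk0, ← hz, hη, mul_comm]

theorem toricMonomial_cayley {ι ν H : Type*} [Fintype ν] [DecidableEq ν] [CommGroup H]
    {blk : ι → ν} {ex : ι → ν → ℤ} (l x : ν → H) (k : ι) :
    toricMonomial (cayley blk ex) (Sum.elim l x) k =
      l (blk k) * toricMonomial (Matrix.of ex) x k := by
  simp only [toricMonomial, cayley, Matrix.of_apply, Fintype.prod_sum_type, Sum.elim_inl,
    Sum.elim_inr]
  congr 1
  rw [Finset.prod_eq_single (blk k) (by simp +contextual) (by simp)]
  simp

variable {ι ν 𝕜 : Type*} [Fintype ι] [Fintype ν] [DecidableEq ν] [Field 𝕜]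
  {blk : ι → ν} {ex : ι → ν → ℤ} {f : ι → 𝕜} {x : ν → 𝕜ˣ} {l : ν → 𝕜}

/-- The system with coefficients `f` is singular at the point `x` of the torus, and `l` is a left
null vector of its Jacobian matrix there, computed with respect to the derivations `xⱼ ∂/∂xⱼ`.
Multiplying each coefficient by its monomial moves `x` to the unit point. -/
def IsSingularWith (blk : ι → ν) (ex : ι → ν → ℤ) (f : ι → 𝕜) (x : ν → 𝕜ˣ) (l : ν → 𝕜) : Prop :=
  IsSingularPair blk ex (fun k => f k * toricMonomial (Matrix.of ex) x k) l

theorem IsSingularWith.isSingularAt {l : ν → 𝕜ˣ}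
    (h : IsSingularWith blk ex f x fun i => (l i : 𝕜)) :
    IsSingularAt (cayley blk ex) (Sum.elim l x) f := by
  unfold IsSingularAt
  convert h.mul_mem_relations using 2 with k
  rw [toricMonomial_cayley, Units.val_mul]
  ring

theorem IsSingularAt.isSingularWith [Nonempty ν] {l : ν → 𝕜ˣ}
    (h : IsSingularAt (cayley blk ex) (Sum.elim l x) f) :
    IsSingularWith blk ex f x fun i => (l i : 𝕜) := by
  obtain ⟨hsum, hex⟩ := mem_relations_cayley.mp h
  simp only [toricMonomial_cayley, Units.val_mul] at hsum hex
  refine ⟨fun i => ?_, fun h₀ => ?_, funext fun j => ?_⟩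
  · refine (mul_eq_zero.mp ?_).resolve_left (l i).ne_zero
    rw [← hsum i, Finset.mul_sum]
    refine Finset.sum_congr rfl fun k hk => ?_
    rw [(Finset.mem_filter.mp hk).2]
    ring
  · exact (l (Classical.arbitrary ν)).ne_zero (congrFun h₀ _)
  · rw [sum_mul_unitJacobian, Pi.zero_apply, ← hex j]
    exact Finset.sum_congr rfl fun k _ => by ring

variable [CharZero 𝕜]

theorem IsSingularWith.eval_eq_zero (hf : IsSingularWith blk ex f x l)
    (hA : IsReducedIrreducible blk ex) (P : MvPolynomial (ι ⊕ ν) 𝕜)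
    (hP : ∀ (f' : ι → 𝕜) (l' : ν → 𝕜ˣ), IsSingularAt (cayley blk ex) (Sum.elim l' x) f' →
      eval (Sum.elim f' fun i => (l' i : 𝕜)) P = 0) :
    eval (Sum.elim f l) P = 0 := by
  let m : ι → 𝕜ˣ := toricMonomial (Matrix.of ex) x
  let Q : MvPolynomial (ι ⊕ ν) 𝕜 :=
    bind₁ (Sum.elim (fun k => X (Sum.inl k) * C ((m k : 𝕜)⁻¹)) fun i => X (Sum.inr i)) P
  have hQ : ∀ f l, eval (Sum.elim (fun k => f k * (m k : 𝕜)) l) Q = eval (Sum.elim f l) P :=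
    fun f l => by
      simp only [← aeval_eq_eval, Q, aeval_bind₁]
      congr 1
      ext (k | i) <;> simp
  by_contra hne
  obtain ⟨c, l', hcl, hQ', hl'⟩ := IsSingularPair.exists_forall_ne_zero hA Q hf (hQ f l ▸ hne)
  obtain ⟨f', rfl⟩ : ∃ f' : ι → 𝕜, c = fun k => f' k * (m k : 𝕜) :=
    ⟨fun k => c k * (m k : 𝕜)⁻¹, by simp⟩
  rw [hQ] at hQ'
  lift l' to ν → 𝕜ˣ using fun i => (hl' i).isUnit
  have hf' : IsSingularWith blk ex f' x fun i => (l' i : 𝕜) := hcl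
  exact hQ' (hP f' l' hf'.isSingularAt)

theorem hornKapranov_cayley_eq_zero_iff [Nonempty ν] (hA : IsReducedIrreducible blk ex)
    {G : MvPolynomial ι 𝕜} :
    hornKapranov (cayley blk ex) 𝕜 G = 0 ↔
      ∀ (f : ι → 𝕜) x l, IsSingularWith blk ex f x l → eval f G = 0 := by
  refine ⟨fun hG f x l hf => ?_, fun hG => hornKapranov_eq_zero_iff.mpr ?_⟩
  · have := hf.eval_eq_zero hA (rename Sum.inl G) fun f' l' hf' => by
      simpa [eval_rename] using hornKapranov_eq_zero_iff.mp hG f' ⟨_, hf'⟩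
    simpa [eval_rename] using this
  · rintro f ⟨z, hf⟩
    rw [← Sum.elim_comp_inl_inr z] at hf
    exact hG f _ _ hf.isSingularWith

variable {G : MvPolynomial ι 𝕜}

theorem IsSingularWith.eval_pderiv_mul_eq (hf : IsSingularWith blk ex f x l)
    (hA : IsReducedIrreducible blk ex) (hW : IsNondefective (cayley blk ex) 𝕜)
    (hG : hornKapranov (cayley blk ex) 𝕜 G = 0) (k k' : ι) :
    eval f (pderiv k G) * (l (blk k') * toricMonomial (Matrix.of ex) x k') =
      eval f (pderiv k' G) * (l (blk k) * toricMonomial (Matrix.of ex) x k) := by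
  have hP := hf.eval_eq_zero hA
    (rename Sum.inl (pderiv k G) * (X (Sum.inr (blk k')) *
        C (toricMonomial (Matrix.of ex) x k' : 𝕜ˣ).1) -
      rename Sum.inl (pderiv k' G) * (X (Sum.inr (blk k)) *
        C (toricMonomial (Matrix.of ex) x k : 𝕜ˣ).1))
    fun f' l' hf' => by
      obtain ⟨η, hη⟩ := hW.exists_eval_pderiv_eq hG hf'
      simp only [map_sub, map_mul, eval_rename, Sum.elim_comp_inl, eval_X, eval_C, Sum.elim_inr, hη,
        toricMonomial_cayley, Units.val_mul]
      ring
  simpa only [map_sub, map_mul, eval_rename, Sum.elim_comp_inl, eval_X, eval_C, Sum.elim_inr,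
    sub_eq_zero] using hP

theorem IsSingularWith.exists_units_eq (hf : IsSingularWith blk ex f x l)
    (hA : IsReducedIrreducible blk ex) (hW : IsNondefective (cayley blk ex) 𝕜)
    (hG : hornKapranov (cayley blk ex) 𝕜 G = 0) (hd : ∀ k, eval f (pderiv k G) ≠ 0) :
    ∃ l' : ν → 𝕜ˣ, l = fun i => (l' i : 𝕜) := by
  suffices h : ∀ i, l i ≠ 0 from ⟨fun i => Units.mk0 _ (h i), rfl⟩
  intro i hi
  obtain ⟨k, rfl⟩ := hA.surjective i
  refine IsSingularPair.ne_zero hf (funext fun i' => ?_)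
  obtain ⟨k', rfl⟩ := hA.surjective i'
  have h := hf.eval_pderiv_mul_eq hA hW hG k k'
  rw [hi, zero_mul, mul_zero] at h
  exact (mul_eq_zero.mp ((mul_eq_zero.mp h).resolve_left (hd k))).resolve_right (Units.ne_zero _)

theorem IsSingularWith.eq_and_exists_smul [Nonempty ν] (hA : IsReducedIrreducible blk ex)
    (hW : IsNondefective (cayley blk ex) 𝕜) (hG : hornKapranov (cayley blk ex) 𝕜 G = 0)
    {z : ν ⊕ ν → 𝕜ˣ} (hz : ∀ k, eval f (pderiv k G) = toricMonomial (cayley blk ex) z k)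
    (hf : IsSingularWith blk ex f x l) :
    x = z ∘ Sum.inr ∧ ∃ a : 𝕜, l = a • fun i => (z (Sum.inl i) : 𝕜) := by
  have : Nonempty ι := hA.surjective.nonempty
  obtain ⟨M, hM⟩ := hA.exists_mul_cayley_eq_one
  obtain ⟨l', rfl⟩ := hf.exists_units_eq hA hW hG fun k => hz k ▸ Units.ne_zero _
  obtain ⟨a, rfl⟩ := hW.exists_eq_mul_zpow hM cayley_mulVec_elim_one_zero hG hz hf.isSingularAt
  exact ⟨by ext; simp, (a⁻¹ : 𝕜ˣ), by ext; simp [mul_comm]⟩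

theorem IsReducedIrreducible.exists_ne_zero_hornKapranov_cayley_eq_zero [Nonempty ν]
    (hA : IsReducedIrreducible blk ex) :
    ∃ G : MvPolynomial ι 𝕜, G ≠ 0 ∧ hornKapranov (cayley blk ex) 𝕜 G = 0 := by
  obtain ⟨M, hM⟩ := hA.exists_mul_cayley_eq_one
  exact exists_ne_zero_hornKapranov_eq_zero hM cayley_mulVec_elim_one_zero
    (t₀ := Sum.inl (Classical.arbitrary ν)) rfl

theorem IsReducedIrreducible.exists_unique_isSingularWith [Nonempty ν]
    (hA : IsReducedIrreducible blk ex) (hlin : ¬ IsEssentiallyLinear blk ex) :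
    ∃ D : MvPolynomial ι 𝕜, hornKapranov (cayley blk ex) 𝕜 D ≠ 0 ∧
      ∀ f, (∀ F, hornKapranov (cayley blk ex) 𝕜 F = 0 → eval f F = 0) → eval f D ≠ 0 →
        ∃ x l, IsSingularWith blk ex f x l ∧
          ∀ y μ, IsSingularWith blk ex f y μ → y = x ∧ ∃ a : 𝕜, μ = a • l := by
  obtain ⟨M, hM⟩ := hA.exists_mul_cayley_eq_one
  have hW := hA.isNondefective_cayley (𝕜 := 𝕜) hlin
  obtain ⟨G, hG, hd⟩ := hW.exists_forall_hornKapranov_pderiv_ne_zero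
    hA.exists_ne_zero_hornKapranov_cayley_eq_zero
  refine ⟨∏ k, pderiv k G, ?_, fun f hf hD => ?_⟩
  · rw [map_prod]
    exact Finset.prod_ne_zero_iff.mpr fun k _ => hd k
  rw [map_prod, Finset.prod_ne_zero_iff] at hD
  obtain ⟨z, hz, hfz⟩ := hW.exists_isSingularAt hM cayley_mulVec_elim_one_zero hG hf
    fun k => hD k (Finset.mem_univ k)
  rw [← Sum.elim_comp_inl_inr z] at hfz
  exact ⟨_, _, hfz.isSingularWith, fun y μ h => h.eq_and_exists_smul hA hW hG hz⟩

end GenericSingularity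

section AlgebraicSets

open MvPolynomial

theorem mem_zclosure {ι : Type*} {Z : Set (ι → ℂ)} {f : ι → ℂ} :
    f ∈ zclosure Z ↔ ∀ G ∈ vanishingIdeal Z, eval f G = 0 := by
  refine ⟨fun hf G hG => ?_, fun hf W ⟨⟨S, hS⟩, hZW⟩ => hS ▸ fun p hp => hf p fun c hc => ?_⟩
  · exact hf {c | eval c G = 0} ⟨⟨{G}, by simp⟩, hG⟩
  · exact (hS ▸ hZW hc : c ∈ {c | ∀ p ∈ S, eval c p = 0}) p hp

theorem vanishingIdeal_zclosure {ι : Type*} (Z : Set (ι → ℂ)) :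
    vanishingIdeal (zclosure Z) = vanishingIdeal Z :=
  le_antisymm (fun _ hG f hf => hG f (mem_zclosure.mpr fun _ hF => hF f hf))
    fun G hG _ hf => mem_zclosure.mp hf G hG

theorem exists_isAlgebraicSet_ssubset_zclosure {ι : Type*} {Z : Set (ι → ℂ)}
    {D : MvPolynomial ι ℂ} (hD : D ∉ vanishingIdeal (zclosure Z)) :
    ∃ S, IsAlgebraicSet S ∧ S ⊂ zclosure Z ∧ ∀ f ∈ zclosure Z \ S, eval f D ≠ 0 := by
  refine ⟨zclosure Z ∩ {f | eval f D = 0}, ⟨insert D (vanishingIdeal Z), ?_⟩,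
    Set.inter_ssubset_left_iff.mpr fun h => hD ?_, fun f hf h₀ => hf.2 ⟨hf.1, h₀⟩⟩
  · ext f
    simp [mem_zclosure, and_comm]
  · exact fun f hf => h hf

end AlgebraicSets

section Tuples

variable {n : ℕ} {A : Fin n → Finset (Fin n → ℤ)}

/-- The exponent vector of the monomial to which a coefficient belongs. -/
abbrev exponent (A : Fin n → Finset (Fin n → ℤ)) (k : CIdx A) : Fin n → ℤ := k.2.1

theorem val_toricMonomial_exponent (x : Torus n) (k : CIdx A) :
    ((toricMonomial (Matrix.of (exponent A)) x k : ℂˣ) : ℂ) = mono k.2.1 x := by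
  simp [toricMonomial, mono]

theorem sum_filter_fst_eq {R : Type*} [AddCommMonoid R] (F : CIdx A → R) (i : Fin n) :
    ∑ k with Sigma.fst k = i, F k = ∑ a ∈ (A i).attach, F ⟨i, a⟩ := by
  rw [Finset.sum_filter, Fintype.sum_sigma, Finset.sum_eq_single i (by simp +contextual) (by simp)]
  simp [Finset.univ_eq_attach]

theorem jacobian_eq_unitJacobian_mul_diagonal (f : Coeff A) (x : Torus n) :
    jacobian A f x = unitJacobian Sigma.fst (exponent A) (fun k => f k * mono k.2.1 x) *
      Matrix.diagonal fun j => (x j : ℂ)⁻¹ := by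
  ext i j
  simp only [jacobian, Matrix.mul_diagonal, unitJacobian, Matrix.of_apply, sum_filter_fst_eq]
  exact congrArg (· * _) (Finset.sum_congr rfl fun a _ => by ring)

theorem vecMul_jacobian_eq_zero_iff {f : Coeff A} {x : Torus n} {l : Fin n → ℂ} :
    l ᵥ* jacobian A f x = 0 ↔
      l ᵥ* unitJacobian Sigma.fst (exponent A) (fun k => f k * mono k.2.1 x) = 0 := by
  rw [jacobian_eq_unitJacobian_mul_diagonal, ← Matrix.vecMul_vecMul, funext_iff, funext_iff]
  simp [Matrix.vecMul_diagonal]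

theorem isSingularWith_iff {f : Coeff A} {x : Torus n} {l : Fin n → ℂ} :
    IsSingularWith Sigma.fst (exponent A) f x l ↔
      IsRoot A f x ∧ l ≠ 0 ∧ l ᵥ* jacobian A f x = 0 := by
  rw [vecMul_jacobian_eq_zero_iff]
  simp only [IsSingularWith, val_toricMonomial_exponent]
  refine ⟨fun h => ⟨fun i => ?_, h.ne_zero, h.vecMul_eq_zero⟩, fun ⟨hroot, hl, hlJ⟩ =>
    ⟨fun i => ?_, hl, hlJ⟩⟩
  · rw [evalAt, ← h.sum_block i, sum_filter_fst_eq]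
  · rw [sum_filter_fst_eq]
    exact hroot i

theorem isSingularRoot_iff {f : Coeff A} {x : Torus n} :
    IsSingularRoot A f x ↔ ∃ l, IsSingularWith Sigma.fst (exponent A) f x l := by
  simp only [isSingularWith_iff, IsSingularRoot, ← Matrix.exists_vecMul_eq_zero_iff,
    exists_and_left]

theorem rank_eq_card_sub_one_of_forall_vecMul_eq_zero {m n K : Type*} [Fintype m] [Fintype n]
    [Field K] (J : Matrix m n K) {l : m → K} (hl : l ≠ 0) (hlJ : l ᵥ* J = 0)
    (h : ∀ μ, μ ᵥ* J = 0 → ∃ a : K, μ = a • l) :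
    J.rank = Fintype.card m - 1 := by
  have hker : LinearMap.ker Jᵀ.mulVecLin = K ∙ l := by
    ext μ
    rw [LinearMap.mem_ker, Matrix.mulVecLin_apply, Matrix.mulVec_transpose,
      Submodule.mem_span_singleton]
    refine ⟨fun hμ => (h μ hμ).imp fun _ => Eq.symm, ?_⟩
    rintro ⟨a, rfl⟩
    rw [Matrix.smul_vecMul, hlJ, smul_zero]
  have hadd := LinearMap.finrank_range_add_finrank_ker Jᵀ.mulVecLin
  rw [hker, finrank_span_singleton hl, Module.finrank_fintype_fun_eq_card] at hadd
  rw [← Matrix.rank_transpose, Matrix.rank]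
  omega

theorem IsSingularWith.rank_jacobian {f : Coeff A} {x : Torus n} {l : Fin n → ℂ}
    (hf : IsSingularWith Sigma.fst (exponent A) f x l)
    (h : ∀ μ, IsSingularWith Sigma.fst (exponent A) f x μ → ∃ a : ℂ, μ = a • l) :
    (jacobian A f x).rank = n - 1 := by
  obtain ⟨hroot, hl, hlJ⟩ := isSingularWith_iff.mp hf
  refine (rank_eq_card_sub_one_of_forall_vecMul_eq_zero _ hl hlJ fun μ hμ => ?_).trans
    (by rw [Fintype.card_fin])
  rcases eq_or_ne μ 0 with rfl | hμ₀
  · exact ⟨0, (zero_smul ℂ l).symm⟩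
  · exact h μ (isSingularWith_iff.mpr ⟨hroot, hμ₀, hμ⟩)

theorem translatesInto_of_eq_empty {s : Finset (Fin n → ℤ)} (hs : s = ∅)
    (L : Submodule ℤ (Fin n → ℤ)) : TranslatesInto s L :=
  ⟨0, by simp [hs]⟩

theorem translatesInto_differenceSpan {i : Fin n} (hi : (A i).Nonempty) {I : Set (Fin n)}
    (hI : i ∈ I) : TranslatesInto (A i) (differenceSpan Sigma.fst (exponent A) ℤ I) := by
  obtain ⟨b, hb⟩ := hi
  exact ⟨b, fun a ha => sub_mem_differenceSpan (R := ℤ) (blk := Sigma.fst) (ex := exponent A)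
    (k := ⟨i, a, ha⟩) (k' := ⟨i, b, hb⟩) rfl hI⟩

theorem nonempty_of_isReducedTuple_of_isIrreducibleTuple (hred : IsReducedTuple A)
    (hirr : IsIrreducibleTuple A) (i : Fin n) : (A i).Nonempty := by
  rw [Finset.nonempty_iff_ne_empty]
  intro hi
  by_cases hn : 1 < n
  · exact hirr ⟨{i}, ⊥, by simp, by simpa using hn, by simp, by
      simpa using translatesInto_of_eq_empty hi ⊥⟩
  · obtain rfl : n = 1 := by have := i.2; omega
    exact hred ⟨⊥, bot_ne_top, fun i' => Subsingleton.elim i i' ▸ translatesInto_of_eq_empty hi ⊥⟩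

theorem isReducedIrreducible_exponent (hred : IsReducedTuple A) (hirr : IsIrreducibleTuple A) :
    IsReducedIrreducible Sigma.fst (exponent A) where
  surjective i :=
    have ⟨a, ha⟩ := nonempty_of_isReducedTuple_of_isIrreducibleTuple hred hirr i
    ⟨⟨i, a, ha⟩, rfl⟩
  reduced := by
    by_contra h
    exact hred ⟨_, h, fun i => translatesInto_differenceSpan
      (nonempty_of_isReducedTuple_of_isIrreducibleTuple hred hirr i) (Set.mem_univ i)⟩
  irreducible I hI hI' := by
    by_contra! h
    have hcard : I.card < n := by
      simpa using (Finset.card_lt_iff_ne_univ I).mpr fun h => hI' (Finset.coe_eq_univ.mpr h)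
    exact hirr ⟨I, _, hI.card_pos, hcard, h, fun i hi => translatesInto_differenceSpan
      (nonempty_of_isReducedTuple_of_isIrreducibleTuple hred hirr i) hi⟩

theorem essentiallyLinear_of_isEssentiallyLinear_exponent
    (h : IsEssentiallyLinear Sigma.fst (exponent A)) : EssentiallyLinear A :=
  have ⟨φ, v, hφ⟩ := h
  ⟨φ, v, fun i a ha => hφ ⟨i, a, ha⟩⟩

variable [NeZero n]

theorem vanishingIdeal_discSet (hA : IsReducedIrreducible Sigma.fst (exponent A)) :
    vanishingIdeal (discSet A) =
      RingHom.ker (hornKapranov (cayley Sigma.fst (exponent A)) ℂ) := by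
  rw [discSet, vanishingIdeal_zclosure]
  ext G
  rw [RingHom.mem_ker, hornKapranov_cayley_eq_zero_iff hA]
  exact ⟨fun hG f x l hf => hG f ⟨x, isSingularRoot_iff.mpr ⟨l, hf⟩⟩,
    fun hG f ⟨x, hx⟩ => (isSingularRoot_iff.mp hx).elim (hG f x)⟩

theorem mem_discSet (hA : IsReducedIrreducible Sigma.fst (exponent A)) {f : Coeff A} :
    f ∈ discSet A ↔ ∀ F, hornKapranov (cayley Sigma.fst (exponent A)) ℂ F = 0 →
      MvPolynomial.eval f F = 0 := by
  rw [discSet, mem_zclosure, ← vanishingIdeal_zclosure, ← discSet, vanishingIdeal_discSet hA]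
  rfl

theorem dualEffective_of_isReducedIrreducible (hA : IsReducedIrreducible Sigma.fst (exponent A))
    (hlin : ¬ IsEssentiallyLinear Sigma.fst (exponent A)) : DualEffective A := by
  have : Nonempty (CIdx A) := hA.surjective.nonempty
  rw [DualEffective, adim, vanishingIdeal_discSet hA]
  exact (hA.isNondefective_cayley hlin).ringKrullDim_quotient_ker_hornKapranov
    hA.exists_ne_zero_hornKapranov_cayley_eq_zero

end Tuples

/-- Corollary 3.23: a reduced irreducible tuple which is not linear up to a
monomial change of variables is dual effective; moreover, outside a proper Zariski-closed
subset `S ⊊ D_A`, every `f ∈ D_A` has exactly one singular root, the Jacobian at that root has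
rank `n − 1`, and every other root is nonsingular. -/
theorem generic_discriminant_point_has_unique_mild_singularity {n : ℕ}
    (A : Fin n → Finset (Fin n → ℤ))
    (hred : IsReducedTuple A) (hirr : IsIrreducibleTuple A)
    (hlin : ¬ EssentiallyLinear A) :
    DualEffective A ∧
    ∃ S : Set (Coeff A), IsAlgebraicSet S ∧ S ⊂ discSet A ∧
      ∀ f ∈ discSet A \ S, ∃ x : Torus n,
        IsSingularRoot A f x ∧ (jacobian A f x).rank = n - 1 ∧
        ∀ y : Torus n, IsSingularRoot A f y → y = x := by
  have : NeZero n := ⟨by rintro rfl; exact hlin ⟨AddEquiv.refl _, 0, fun i => i.elim0⟩⟩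
  have hA := isReducedIrreducible_exponent hred hirr
  have hlin' := mt essentiallyLinear_of_isEssentiallyLinear_exponent hlin
  obtain ⟨D, hD, huniq⟩ := hA.exists_unique_isSingularWith (𝕜 := ℂ) hlin'
  have hD' : D ∉ vanishingIdeal (discSet A) := by rwa [vanishingIdeal_discSet hA, RingHom.mem_ker]
  obtain ⟨S, hS, hSdisc, hDS⟩ := exists_isAlgebraicSet_ssubset_zclosure hD'
  refine ⟨dualEffective_of_isReducedIrreducible hA hlin', S, hS, hSdisc, fun f hf => ?_⟩
  obtain ⟨x, l, hx, hxl⟩ := huniq f ((mem_discSet hA).mp hf.1) (hDS f hf)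
  refine ⟨x, isSingularRoot_iff.mpr ⟨l, hx⟩, hx.rank_jacobian fun μ hμ => (hxl x μ hμ).2,
    fun y hy => ?_⟩
  obtain ⟨μ, hμ⟩ := isSingularRoot_iff.mp hy
  exact (hxl y μ hμ).1

end Esterov
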